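/- Let γ > 0, 1 < α < 2, p > 1, a > 0, b > 0, and let f be locally integrable on [0,∞). Suppose w ∈ C¹([0,∞)), w ≢ 0, the function t ↦ ₀I_t^{2−α}(w(s) − w'(0)s − w(0)) is in AC²([0,T]) for every T > 0, and for almost every t ≥ 0 one has (₀D_t^α w)(t) + a·w(t) = (₀I_t^γ f)(t) and f(t) ≥ b·|w(t)|^p. If γ ≥ α/2, α + γ ≤ 2, and w'(0) > 0, then liminf_{t→+∞} t^{α−1}·w(t) > 0. -/

import Mathlib

/-!
The Caputo equation is integrated to the Volterra equation
`w = w(0) + w'(0) t + I^{α+γ} f - a I^α w` (`volterra`). Substituting it into itself repeatedly and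
passing to the limit gives, for `t > 0`,

  `w(t) = w(0) E_{α,1}(-a t^α) + w'(0) t E_{α,2}(-a t^α)
      + ∫₀ᵗ (t-s)^{α+γ-1} E_{α,α+γ}(-a (t-s)^α) f(s) ds`,

with Mittag-Leffler functions `E_{α,β}`. Two facts about them finish the proof.

* Positivity (`ml_nonneg`): `t^{β-1} E_{α,β}(-a t^α) ≥ 0` for `β ≥ 3α/2`. Its Laplace transform
  `x^{α-β} / (x^α + a)` is a superposition with nonnegative weights of the completely monotone functions
  `x^{3α/2-β} exp(-τ x^{α/2})`, and a Bernstein-polynomial argument recovers the sign of the function.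
  For `β = α + γ` the condition is `γ ≥ α/2`. Since `f ≥ b |w|^p ≥ 0`, the integral term is
  nonnegative and can be dropped (`solution_lower_bound`).

* Decay (`ml_decay`): `t^β E_{α,β}(-a t^α)` is bounded for `α - 1 < β < α`, by Laplace inversion and
  moving the line of integration to the imaginary axis. It is applied with `β = 1` and `β = 2 - α`;
  the latter is allowed because `α/2 ≤ γ ≤ 2 - α` forces `α ≤ 4/3`. As
  `a t^α E_{α,2} = 1/Γ(2-α) - E_{α,2-α}`, it follows that
  `t^{α-1} w(t) ≥ w'(0) / (a Γ(2-α)) - K t^{α-2}` (`lower_asymptotics`), and the right side tends to a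
  positive limit.
-/

open MeasureTheory Filter

/-- Riemann–Liouville fractional integral of order `σ` based at `0`:
`(₀I_t^σ f)(t) = (1/Γ(σ)) ∫₀ᵗ (t−s)^{σ−1} f(s) ds`. -/
noncomputable def rlInt (σ : ℝ) (f : ℝ → ℝ) (t : ℝ) : ℝ :=
  (1 / Real.Gamma σ) * ∫ s in (0:ℝ)..t, (t - s) ^ (σ - 1) * f s

/-- The function whose second derivative is the (left) Caputo derivative of order `α ∈ (1,2]`:
for `α < 2` it is `₀I_t^{2−α}(w(s) − w'(0)·s − w(0))`, and for `α = 2` it is `w` itself. -/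
noncomputable def capKernel (α : ℝ) (w : ℝ → ℝ) : ℝ → ℝ :=
  if α = 2 then w else rlInt (2 - α) (fun s => w s - deriv w 0 * s - w 0)

/-- Left Caputo fractional derivative of order `α ∈ (1,2]`:
`(₀D_t^α w)(t) = (d²/dt²)[ ₀I_t^{2−α}(w(s) − w'(0)s − w(0)) ](t)` (second derivative of `w` when `α = 2`). -/
noncomputable def caputoD (α : ℝ) (w : ℝ → ℝ) : ℝ → ℝ :=
  deriv (deriv (capKernel α w))

/-- `g ∈ AC²([0,T])`: `g` is differentiable on `[0,T]`, its second derivative is integrable,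
and `g'` is the integral of `g''` (i.e. `g'` is absolutely continuous). -/
def AC2On (g : ℝ → ℝ) (T : ℝ) : Prop :=
  (∀ t ∈ Set.Icc (0:ℝ) T, DifferentiableAt ℝ g t) ∧
  IntervalIntegrable (deriv (deriv g)) volume 0 T ∧
  ∀ t ∈ Set.Icc (0:ℝ) T, deriv g t = deriv g 0 + ∫ s in (0:ℝ)..t, deriv (deriv g) s

section Helpers

open Set Topology

/-! ### The Mittag-Leffler series and termwise Laplace transforms -/

/-- The two-parameter Mittag-Leffler function `E_{α,β}` evaluated at `-a t ^ α`, as a power series in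
`t ^ α`. It is used only for `t ≥ 0`. -/
noncomputable def mlS (α β a t : ℝ) : ℝ :=
  ∑' n : ℕ, (-a) ^ n * t ^ (α * n) / Real.Gamma (α * n + β)

/-- The gamma function grows factorially, so the Mittag-Leffler series converges absolutely. -/
lemma ml_summable {α β : ℝ} (hα : 1 ≤ α) (hβ : 0 < β) {A T : ℝ} (hA : 0 ≤ A) (hT : 0 ≤ T) :
    Summable fun n : ℕ => A ^ n * T ^ (α * n) / Real.Gamma (α * n + β) := by
  rw [← summable_nat_add_iff 2]
  set X := A * T ^ α with hX
  have hX0 : 0 ≤ X := by positivity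
  refine Summable.of_nonneg_of_le (fun n => ?_) (fun n => ?_)
    ((Real.summable_pow_div_factorial X).mul_left (X ^ 2))
  · have : 0 < Real.Gamma (α * (n + 2 : ℕ) + β) := Real.Gamma_pos_of_pos (by positivity)
    positivity
  · have h1 : A ^ (n + 2) * T ^ (α * (n + 2 : ℕ)) = X ^ 2 * X ^ n := by
      rw [Real.rpow_mul hT, Real.rpow_natCast, hX]; ring
    have h2 : (n.factorial : ℝ) ≤ Real.Gamma (α * (n + 2 : ℕ) + β) := by
      have h3 : ((n + 1).factorial : ℝ) = Real.Gamma ((n + 1 : ℕ) + 1) :=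
        (Real.Gamma_nat_eq_factorial (n + 1)).symm
      calc (n.factorial : ℝ) ≤ ((n + 1).factorial : ℝ) := by
            exact_mod_cast Nat.factorial_le (Nat.le_succ n)
        _ = Real.Gamma ((n + 1 : ℕ) + 1) := h3
        _ ≤ _ := by
          apply Real.Gamma_strictMonoOn_Ici.monotoneOn
          · simp only [mem_Ici]; push_cast; linarith [(Nat.cast_nonneg n : (0:ℝ) ≤ n)]
          · simp only [mem_Ici]; push_cast
            nlinarith [(Nat.cast_nonneg n : (0:ℝ) ≤ n)]
          · push_cast
            nlinarith [(Nat.cast_nonneg n : (0:ℝ) ≤ n)]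
    rw [h1, mul_div_assoc]
    gcongr

lemma ml_norm_le {α β : ℝ} (hα : 0 ≤ α) (hβ : 0 < β) {a t T : ℝ} (ha : 0 ≤ a) (ht : 0 ≤ t)
    (hT : t ≤ T) (n : ℕ) :
    ‖(-a) ^ n * t ^ (α * n) / Real.Gamma (α * n + β)‖
      ≤ a ^ n * T ^ (α * n) / Real.Gamma (α * n + β) := by
  have : 0 < Real.Gamma (α * n + β) := Real.Gamma_pos_of_pos (by positivity)
  rw [norm_div, norm_mul, norm_pow, norm_neg, Real.norm_of_nonneg ha, Real.norm_of_nonneg this.le,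
    Real.norm_of_nonneg (by positivity)]
  gcongr

lemma ml_hasSum {α β : ℝ} (hα : 1 ≤ α) (hβ : 0 < β) {a t : ℝ} (ha : 0 ≤ a) (ht : 0 ≤ t) :
    HasSum (fun n : ℕ => (-a) ^ n * t ^ (α * n) / Real.Gamma (α * n + β)) (mlS α β a t) :=
  (Summable.of_norm_bounded (ml_summable hα hβ ha ht)
    (fun n => ml_norm_le (by linarith) hβ ha ht le_rfl n)).hasSum

lemma ml_continuousOn {α β : ℝ} (hα : 1 ≤ α) (hβ : 0 < β) {a : ℝ} (ha : 0 ≤ a) :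
    ContinuousOn (mlS α β a) (Ici 0) := by
  intro x hx
  have h : ContinuousOn (mlS α β a) (Icc 0 (x + 1)) := by
    refine continuousOn_tsum (u := fun n : ℕ => a ^ n * (x + 1) ^ (α * n) / Real.Gamma (α * n + β))
      (fun n => ?_) (ml_summable hα hβ ha (by linarith [mem_Ici.1 hx])) (fun n t ht => ?_)
    · refine ContinuousOn.div_const (ContinuousOn.mul continuousOn_const ?_) _
      exact (Real.continuous_rpow_const (by positivity)).continuousOn
    · exact ml_norm_le (by linarith) hβ ha ht.1 ht.2 n
  refine (h x ⟨hx, by linarith⟩).mono_of_mem_nhdsWithin ?_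
  rw [← Ici_inter_Iic]
  exact inter_mem self_mem_nhdsWithin (mem_nhdsWithin_of_mem_nhds (Iic_mem_nhds (by linarith)))

lemma ml_hasSum' {α β : ℝ} (hα : 1 ≤ α) (hβ : 0 < β) {a t : ℝ} (ha : 0 ≤ a) (ht : 0 < t) (δ : ℝ) :
    HasSum (fun n : ℕ => (-a) ^ n / Real.Gamma (α * n + β) * t ^ (α * n + δ))
      (t ^ δ * mlS α β a t) := by
  refine ((ml_hasSum hα hβ ha ht.le).mul_left (t ^ δ)).congr_fun ?_
  intro n
  rw [Real.rpow_add ht]; ring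

/-- Laplace transform of a power at complex `s` with positive real part. Both sides are analytic in `s`
(the left one as the moment generating function of the measure `t ^ (e - 1) dt`) and they agree for
real `s`. -/
lemma gamma_laplace {e : ℝ} (he : 0 < e) {s : ℂ} (hs : 0 < s.re) :
    ∫ t in Ioi (0:ℝ), Complex.exp (-(s * t)) * ((t ^ (e - 1) : ℝ) : ℂ)
      = (1 / s) ^ (e : ℂ) * Real.Gamma e := by
  set μ : Measure ℝ := (volume.restrict (Ioi (0:ℝ))).withDensity
    (fun t => ENNReal.ofReal (t ^ (e - 1))) with hμ
  have hd : Measurable fun t : ℝ => ENNReal.ofReal (t ^ (e - 1)) := by fun_prop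
  have hdt : ∀ᵐ t ∂(volume.restrict (Ioi (0:ℝ))), ENNReal.ofReal (t ^ (e - 1)) < ⊤ :=
    ae_of_all _ fun t => ENNReal.ofReal_lt_top
  have hset : Iio (0:ℝ) ⊆ ProbabilityTheory.integrableExpSet id μ := by
    intro x hx
    simp only [ProbabilityTheory.integrableExpSet, Set.mem_ofPred_eq, id]
    rw [hμ, integrable_withDensity_iff hd hdt]
    have := integrableOn_rpow_mul_exp_neg_mul_rpow (s := e - 1) (p := 1) (b := -x)
      (by linarith) one_pos (by simpa using hx)
    refine (this.congr_fun ?_ measurableSet_Ioi)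
    intro t ht
    have ht' : (0:ℝ) < t := ht
    simp only [Real.rpow_one, neg_neg]
    rw [ENNReal.toReal_ofReal (by positivity)]; ring
  have hval : ∀ z : ℂ, ProbabilityTheory.complexMGF id μ z
      = ∫ t in Ioi (0:ℝ), Complex.exp (z * t) * ((t ^ (e - 1) : ℝ) : ℂ) := by
    intro z
    rw [ProbabilityTheory.complexMGF, hμ, integral_withDensity_eq_integral_toReal_smul hd hdt]
    refine setIntegral_congr_fun measurableSet_Ioi fun t ht => ?_
    have ht' : (0:ℝ) < t := ht
    simp only [id]
    rw [ENNReal.toReal_ofReal (by positivity), Complex.real_smul, mul_comm]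
  have hU : IsOpen {z : ℂ | z.re < 0} := isOpen_lt Complex.continuous_re continuous_const
  have hUc : IsPreconnected {z : ℂ | z.re < 0} := (convex_halfSpace_re_lt 0).isPreconnected
  have han1 : AnalyticOnNhd ℂ (ProbabilityTheory.complexMGF id μ) {z : ℂ | z.re < 0} := by
    refine ProbabilityTheory.analyticOnNhd_complexMGF.mono ?_
    intro z hz
    exact interior_mono hset (by rw [interior_Iio]; exact hz)
  have han2 : AnalyticOnNhd ℂ (fun z : ℂ => (1 / (-z)) ^ (e : ℂ) * Real.Gamma e)
      {z : ℂ | z.re < 0} := by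
    refine DifferentiableOn.analyticOnNhd ?_ hU
    intro z hz
    have hz' : z.re < 0 := hz
    have hz0 : z ≠ 0 := by rintro rfl; simp at hz'
    have hsl : (1 / (-z)) ∈ Complex.slitPlane := by
      rw [one_div, Complex.mem_slitPlane_iff]
      left
      rw [Complex.inv_re, Complex.neg_re]
      exact div_pos (by linarith) (Complex.normSq_pos.2 (neg_ne_zero.2 hz0))
    refine DifferentiableAt.differentiableWithinAt ?_
    have h1 : DifferentiableAt ℂ (fun z : ℂ => 1 / (-z)) z :=
      (differentiableAt_const _).div (differentiableAt_id.neg) (neg_ne_zero.2 hz0)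
    exact (h1.cpow_const hsl).mul_const _
  have heq : EqOn (ProbabilityTheory.complexMGF id μ)
      (fun z : ℂ => (1 / (-z)) ^ (e : ℂ) * Real.Gamma e) {z : ℂ | z.re < 0} := by
    refine han1.eqOn_of_preconnected_of_frequently_eq han2 hUc (z₀ := -1) (by simp) ?_
    have hreal : ∀ x : ℝ, 0 < x → ProbabilityTheory.complexMGF id μ (-x : ℂ)
        = (1 / (-(-x : ℂ))) ^ (e : ℂ) * Real.Gamma e := by
      intro x hx
      rw [hval, neg_neg, ← Complex.Gamma_ofReal,
        ← Complex.integral_cpow_mul_exp_neg_mul_Ioi (by simpa using he) hx]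
      refine setIntegral_congr_fun measurableSet_Ioi fun t ht => ?_
      have ht' : (0:ℝ) < t := ht
      rw [Complex.ofReal_cpow ht'.le]
      push_cast
      rw [neg_mul]; ring
    have hlim : Tendsto (fun n : ℕ => (-((1 + 1 / ((n:ℝ) + 1) : ℝ)) : ℂ)) atTop (𝓝[≠] (-1)) := by
      refine tendsto_nhdsWithin_iff.2 ⟨?_, ?_⟩
      · have h1 : Tendsto (fun n : ℕ => (1 + 1 / ((n:ℝ) + 1) : ℝ)) atTop (𝓝 (1 + 0)) :=
          tendsto_const_nhds.add tendsto_one_div_add_atTop_nhds_zero_nat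
        have h2 := ((Complex.continuous_ofReal.tendsto _).comp h1).neg
        simpa using h2
      · refine Eventually.of_forall fun n => ?_
        simp only [mem_compl_iff, mem_singleton_iff, neg_inj]
        intro h
        have h' : (1 + 1 / ((n:ℝ) + 1) : ℝ) = 1 := by exact_mod_cast h
        have : (0:ℝ) < 1 / ((n:ℝ) + 1) := by positivity
        linarith
    refine hlim.frequently (Frequently.of_forall fun n => ?_)
    exact hreal _ (by positivity)
  have hs' : -s ∈ {z : ℂ | z.re < 0} := by simpa using hs
  have h4 := heq hs'
  simp only [hval, neg_neg, neg_mul] at h4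
  exact h4

/-- Termwise Laplace transform of a generalized power series `∑ d n * t ^ (e n - 1)`; the summability
hypothesis is absolute convergence of the transformed series. -/
lemma laplace_series (d e : ℕ → ℝ) (he : ∀ n, 0 < e n) (s : ℂ) (hs : 0 < s.re)
    (hsum : Summable fun n => |d n| * Real.Gamma (e n) / s.re ^ (e n)) (u : ℝ → ℝ)
    (hu : ∀ t > 0, HasSum (fun n => d n * t ^ (e n - 1)) (u t)) :
    IntegrableOn (fun t : ℝ => Complex.exp (-(s * t)) * u t) (Ioi 0) ∧
    HasSum (fun n => (d n : ℂ) * Real.Gamma (e n) * (1 / s) ^ (e n : ℂ))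
      (∫ t in Ioi (0:ℝ), Complex.exp (-(s * t)) * u t) := by
  set F : ℕ → ℝ → ℂ := fun n t => Complex.exp (-(s * t)) * ((d n * t ^ (e n - 1) : ℝ) : ℂ) with hF
  have hnorm : ∀ n, ∀ t ∈ Ioi (0:ℝ), ‖F n t‖ = |d n| * (t ^ (e n - 1) * Real.exp (-(s.re * t))) := by
    intro n t ht
    have ht' : 0 < t := ht
    simp only [hF, norm_mul, Complex.norm_exp, Complex.norm_real, Complex.neg_re, Complex.mul_re,
      Complex.ofReal_re, Complex.ofReal_im, mul_zero, sub_zero, Real.norm_eq_abs]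
    rw [abs_of_nonneg (by positivity : 0 ≤ t ^ (e n - 1))]
    ring
  have hg : ∀ n, IntegrableOn (fun t : ℝ => t ^ (e n - 1) * Real.exp (-(s.re * t))) (Ioi 0) := by
    intro n
    have := integrableOn_rpow_mul_exp_neg_mul_rpow (s := e n - 1) (p := 1) (b := s.re)
      (by linarith [he n]) one_pos hs
    simpa using this
  have hmeas : ∀ n, AEStronglyMeasurable (F n) (volume.restrict (Ioi 0)) := by
    intro n
    apply Measurable.aestronglyMeasurable
    fun_prop
  have hInt : ∀ n, Integrable (F n) (volume.restrict (Ioi 0)) := by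
    intro n
    refine ((hg n).const_mul |d n|).mono' (hmeas n) ?_
    filter_upwards [ae_restrict_mem measurableSet_Ioi] with t ht
    exact (hnorm n t ht).le
  have hval : ∀ n, ∫ t in Ioi (0:ℝ), ‖F n t‖ = |d n| * Real.Gamma (e n) / s.re ^ (e n) := by
    intro n
    rw [setIntegral_congr_fun measurableSet_Ioi (hnorm n), integral_const_mul,
      Real.integral_rpow_mul_exp_neg_mul_Ioi (he n) hs, Real.div_rpow zero_le_one hs.le, Real.one_rpow]
    ring
  have hsum' : Summable fun n => ∫ t in Ioi (0:ℝ), ‖F n t‖ := by simpa only [hval] using hsum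
  have hu' : ∀ t ∈ Ioi (0:ℝ), HasSum (fun n => F n t) (Complex.exp (-(s * t)) * u t) := by
    intro t ht
    exact (Complex.hasSum_ofReal.2 (hu t ht)).mul_left _
  have key := hasSum_integral_of_summable_integral_norm hInt hsum'
  constructor
  · refine ⟨?_, ?_⟩
    · refine aestronglyMeasurable_of_tendsto_ae atTop
        (f := fun N t => ∑ n ∈ Finset.range N, F n t)
        (fun N => ?_) ?_
      · exact Finset.aestronglyMeasurable_fun_sum _ fun n _ => hmeas n
      · filter_upwards [ae_restrict_mem measurableSet_Ioi] with t ht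
        exact (hu' t ht).tendsto_sum_nat
    · rw [hasFiniteIntegral_iff_enorm]
      calc ∫⁻ t in Ioi (0:ℝ), ‖Complex.exp (-(s * t)) * (u t : ℂ)‖ₑ
          ≤ ∫⁻ t in Ioi (0:ℝ), ∑' n, ‖F n t‖ₑ := by
            refine lintegral_mono_ae ?_
            filter_upwards [ae_restrict_mem measurableSet_Ioi] with t ht
            rw [← (hu' t ht).tsum_eq]
            exact enorm_tsum_le_tsum_enorm
        _ = ∑' n, ∫⁻ t in Ioi (0:ℝ), ‖F n t‖ₑ :=
            lintegral_tsum fun n => (hmeas n).enorm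
        _ < ⊤ := by
            have : ∀ n, ∫⁻ t in Ioi (0:ℝ), ‖F n t‖ₑ
                = ENNReal.ofReal (∫ t in Ioi (0:ℝ), ‖F n t‖) := fun n =>
              (ofReal_integral_norm_eq_lintegral_enorm (hInt n)).symm
            simp_rw [this]
            exact hsum'.tsum_ofReal_lt_top
  · rw [setIntegral_congr_fun measurableSet_Ioi (fun t ht => (hu' t ht).tsum_eq)] at key
    refine key.congr_fun fun n => ?_
    rw [mul_assoc, mul_comm _ ((1 / s) ^ (e n : ℂ)), ← gamma_laplace (he n) hs,
      ← integral_const_mul]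
    refine setIntegral_congr_fun measurableSet_Ioi fun t ht => ?_
    simp only [hF]
    push_cast; ring

/-! ### Complete monotonicity and iterated differences -/

/-- Complete monotonicity on `(0, ∞)` up to order `n`: the first `n` derivatives exist there and
alternate in sign, starting from `f ≥ 0`. -/
def CMn : ℕ → (ℝ → ℝ) → Prop
  | 0, f => ∀ x > 0, 0 ≤ f x
  | n + 1, f => (∀ x > 0, 0 ≤ f x) ∧ ∃ g : ℝ → ℝ, (∀ x > 0, HasDerivAt f (-g x) x) ∧ CMn n g

lemma CMn.nonneg {n : ℕ} {f : ℝ → ℝ} (h : CMn n f) : ∀ x > 0, 0 ≤ f x := by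
  cases n with
  | zero => exact h
  | succ n => exact h.1

lemma CMn.of_succ {n : ℕ} : ∀ {f : ℝ → ℝ}, CMn (n + 1) f → CMn n f := by
  induction n with
  | zero => intro f h; exact h.1
  | succ n ih =>
    rintro f ⟨h0, g, hg, hg'⟩
    exact ⟨h0, g, hg, ih hg'⟩

lemma CMn.add {n : ℕ} : ∀ {f g : ℝ → ℝ}, CMn n f → CMn n g → CMn n (fun x => f x + g x) := by
  induction n with
  | zero => intro f g hf hg x hx; exact add_nonneg (hf x hx) (hg x hx)
  | succ n ih =>
    rintro f g ⟨hf0, f', hf, hf'⟩ ⟨hg0, g', hg, hg'⟩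
    refine ⟨fun x hx => add_nonneg (hf0 x hx) (hg0 x hx), fun x => f' x + g' x, fun x hx => ?_,
      ih hf' hg'⟩
    rw [neg_add]
    exact (hf x hx).add (hg x hx)

lemma CMn.mul {n : ℕ} : ∀ {f g : ℝ → ℝ}, CMn n f → CMn n g → CMn n (fun x => f x * g x) := by
  induction n with
  | zero => intro f g hf hg x hx; exact mul_nonneg (hf x hx) (hg x hx)
  | succ n ih =>
    intro f g hf1 hg1
    have hf2 := hf1.of_succ
    have hg2 := hg1.of_succ
    obtain ⟨hf0, f', hf, hf'⟩ := hf1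
    obtain ⟨hg0, g', hg, hg'⟩ := hg1
    refine ⟨fun x hx => mul_nonneg (hf0 x hx) (hg0 x hx), fun x => f' x * g x + f x * g' x,
      fun x hx => ?_, (ih hf' hg2).add (ih hf2 hg')⟩
    refine ((hf x hx).mul (hg x hx)).congr_deriv ?_
    ring

lemma CMn.rpow_neg (n : ℕ) : ∀ {c δ : ℝ}, 0 ≤ c → 0 ≤ δ → CMn n (fun x => c * x ^ (-δ)) := by
  induction n with
  | zero => intro c δ hc hδ x hx; positivity
  | succ n ih =>
    intro c δ hc hδ
    refine ⟨fun x hx => by positivity, fun x => (c * δ) * x ^ (-(δ + 1)), fun x hx => ?_,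
      ih (by positivity) (by positivity)⟩
    refine ((Real.hasDerivAt_rpow_const (p := -δ) (Or.inl (ne_of_gt hx))).const_mul c).congr_deriv ?_
    rw [show -(δ + 1) = -δ - 1 by ring]; ring

/-- `exp (-τ x ^ κ)` is completely monotone for `0 ≤ κ ≤ 1`: its derivative is minus the product of
itself with the completely monotone function `τ κ x ^ (κ - 1)`, so the order can be raised one
step at a time. -/
lemma CMn.exp_neg_rpow (n : ℕ) {τ κ : ℝ} (hτ : 0 ≤ τ) (hκ : 0 ≤ κ) (hκ1 : κ ≤ 1) :
    CMn n (fun x => Real.exp (-(τ * x ^ κ))) := by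
  induction n with
  | zero => intro x hx; positivity
  | succ n ih =>
    refine ⟨fun x hx => by positivity,
      fun x => (τ * κ * x ^ (-(1 - κ))) * Real.exp (-(τ * x ^ κ)), fun x hx => ?_,
      (CMn.rpow_neg n (by positivity) (by linarith)).mul ih⟩
    refine ((Real.hasDerivAt_rpow_const (p := κ)
      (Or.inl (ne_of_gt hx))).const_mul τ).neg.exp.congr_deriv ?_
    rw [show -(1 - κ) = κ - 1 by ring]; simp only [Pi.neg_apply]; ring

/-- The difference operator `f ↦ f - f (· + 1)`. Applied `n` times to a Laplace transform it inserts
the factor `(1 - exp (-t)) ^ n` under the integral, and it preserves complete monotonicity at the cost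
of one order. -/
def bdiff (f : ℝ → ℝ) : ℝ → ℝ := fun x => f x - f (x + 1)

lemma CMn.bdiff {n : ℕ} : ∀ {f : ℝ → ℝ}, CMn (n + 1) f → CMn n (bdiff f) := by
  have h0 : ∀ {n : ℕ} {f : ℝ → ℝ}, CMn (n + 1) f → ∀ x > 0, 0 ≤ _root_.bdiff f x := by
    rintro n f ⟨hf0, f', hf, hf'⟩ x hx
    have hanti : AntitoneOn f (Ioi 0) := by
      refine antitoneOn_of_deriv_nonpos (convex_Ioi 0)
        (fun y hy => (hf y hy).continuousAt.continuousWithinAt) ?_ ?_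
      · rw [interior_Ioi]
        exact fun y hy => (hf y hy).differentiableAt.differentiableWithinAt
      · rw [interior_Ioi]
        intro y hy
        rw [(hf y hy).deriv]
        linarith [hf'.nonneg y hy]
    have := hanti (mem_Ioi.2 hx) (mem_Ioi.2 (by linarith : (0:ℝ) < x + 1)) (by linarith)
    simp only [_root_.bdiff]; linarith
  induction n with
  | zero => intro f h; exact h0 h
  | succ n ih =>
    intro f h
    refine ⟨h0 h, ?_⟩
    obtain ⟨hf0, f', hf, hf'⟩ := h
    refine ⟨_root_.bdiff f', fun x hx => ?_, ih hf'⟩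
    have h1 := (hf x hx).sub ((hf (x + 1) (by linarith)).comp_add_const x 1)
    refine h1.congr_deriv ?_
    simp only [_root_.bdiff]; ring

lemma CMn.iterate_bdiff_nonneg {n : ℕ} : ∀ {f : ℝ → ℝ}, CMn n f →
    ∀ x > 0, 0 ≤ (_root_.bdiff^[n] f) x := by
  induction n with
  | zero => intro f h; exact h
  | succ n ih => intro f h; rw [Function.iterate_succ_apply]; exact ih h.bdiff

lemma iterate_bdiff_congr {x0 : ℝ} (n : ℕ) : ∀ {f g : ℝ → ℝ}, (∀ x ≥ x0, f x = g x) →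
    ∀ x ≥ x0, (bdiff^[n] f) x = (bdiff^[n] g) x := by
  induction n with
  | zero => intro f g h; exact h
  | succ n ih =>
    intro f g h
    simp only [Function.iterate_succ_apply]
    refine ih fun x hx => ?_
    simp only [bdiff]
    rw [h x hx, h (x + 1) (by linarith)]

lemma iterate_bdiff_integral {Ω : Type*} [MeasurableSpace Ω] {μ : Measure Ω} {x0 : ℝ} (n : ℕ) :
    ∀ {G : ℝ → Ω → ℝ}, (∀ x ≥ x0, Integrable (G x) μ) → ∀ x ≥ x0,
      (bdiff^[n] (fun y => ∫ τ, G y τ ∂μ)) x = ∫ τ, (bdiff^[n] (fun y => G y τ)) x ∂μ := by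
  induction n with
  | zero => intro G h x hx; rfl
  | succ n ih =>
    intro G h x hx
    simp only [Function.iterate_succ_apply]
    rw [iterate_bdiff_congr (x0 := x0) n (g := fun y => ∫ τ, (G y τ - G (y + 1) τ) ∂μ) _ x hx]
    · exact ih (G := fun y τ => G y τ - G (y + 1) τ)
        (fun y hy => (h y hy).sub (h (y + 1) (by linarith))) x hx
    · intro y hy
      simp only [bdiff]
      rw [integral_sub (h y hy) (h (y + 1) (by linarith))]

lemma iterate_bdiff_mul_const (n : ℕ) (c : ℝ) : ∀ (f : ℝ → ℝ) (x : ℝ),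
    (bdiff^[n] (fun y => f y * c)) x = (bdiff^[n] f) x * c := by
  induction n with
  | zero => intro f x; rfl
  | succ n ih =>
    intro f x
    simp only [Function.iterate_succ_apply]
    have : bdiff (fun y => f y * c) = fun y => bdiff f y * c := by
      funext y
      simp only [bdiff]; ring
    rw [this, ih]

lemma iterate_bdiff_exp (n : ℕ) (t x : ℝ) :
    (bdiff^[n] (fun y => Real.exp (-(y * t)))) x = Real.exp (-(x * t)) * (1 - Real.exp (-t)) ^ n := by
  induction n with
  | zero => simp
  | succ n ih =>
    rw [Function.iterate_succ_apply]
    have : bdiff (fun y => Real.exp (-(y * t)))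
        = fun y => Real.exp (-(y * t)) * (1 - Real.exp (-t)) := by
      funext y
      simp only [bdiff]
      rw [show -((y + 1) * t) = -(y * t) + -t by ring, Real.exp_add]; ring
    rw [this, iterate_bdiff_mul_const, ih]; ring

lemma integral_exp_one_sub_cos {u c : ℝ} (hu : 0 < u) :
    IntegrableOn (fun τ : ℝ => Real.exp (-(τ * u)) * (1 - Real.cos (c * τ))) (Ioi 0) ∧
    ∫ τ in Ioi (0:ℝ), Real.exp (-(τ * u)) * (1 - Real.cos (c * τ))
      = c ^ 2 / (u * (u ^ 2 + c ^ 2)) := by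
  have hre : ((-u : ℂ) + c * Complex.I).re < 0 := by simpa using hu
  have h1 := integrableOn_exp_mul_Ioi (a := -u) (by linarith) 0
  have h2 := integrableOn_exp_mul_complex_Ioi hre 0
  have e1 := integral_exp_mul_Ioi (a := -u) (by linarith) 0
  have e2 := integral_exp_mul_complex_Ioi hre 0
  have hpt : ∀ τ : ℝ, Real.exp (-(τ * u)) * (1 - Real.cos (c * τ))
      = Real.exp (-u * τ) - (Complex.exp (((-u : ℂ) + c * Complex.I) * τ)).re := by
    intro τ
    rw [Complex.exp_re]
    simp
    rw [mul_comm τ u]; ring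
  simp_rw [hpt]
  have h2' : IntegrableOn (fun τ : ℝ => (Complex.exp (((-u : ℂ) + c * Complex.I) * τ)).re) (Ioi 0) :=
    h2.re
  refine ⟨h1.sub h2', ?_⟩
  rw [integral_sub h1 h2', e1]
  have h3 := integral_re (𝕜 := ℂ) h2
  simp only [RCLike.re_to_complex] at h3
  rw [h3, e2]
  have h4 : u ^ 2 + c ^ 2 ≠ 0 := by positivity
  simp [Complex.div_re, Complex.normSq_apply]
  have h5 : u * u + c * c ≠ 0 := by nlinarith
  field_simp
  ring

/-! ### Positivity of the Mittag-Leffler kernel -/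

/-- If the integrals of `k` against `exp (-x t) (1 - exp (-t)) ^ n` are nonnegative for `x ≥ l`, then so
is the integral of `exp (-l t) k t` against any nonnegative continuous function of `exp (-t)`, by
Bernstein approximation. -/
lemma integral_bernstein_nonneg {k : ℝ → ℝ} {l : ℝ}
    (hInt : IntegrableOn (fun t => Real.exp (-(l * t)) * k t) (Ioi 0))
    (hpos : ∀ n : ℕ, ∀ x ≥ l,
      0 ≤ ∫ t in Ioi (0:ℝ), Real.exp (-(x * t)) * (1 - Real.exp (-t)) ^ n * k t)
    (e : ℝ → unitInterval) (he : ∀ t > 0, (e t : ℝ) = Real.exp (-t)) (hem : Measurable e)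
    (φ : C(unitInterval, ℝ)) (hφ : ∀ x, 0 ≤ φ x) :
    0 ≤ ∫ t in Ioi (0:ℝ), φ (e t) * (Real.exp (-(l * t)) * k t) := by
  have hI : ∀ ψ : C(unitInterval, ℝ),
      IntegrableOn (fun t => ψ (e t) * (Real.exp (-(l * t)) * k t)) (Ioi 0) := by
    intro ψ
    refine Integrable.bdd_mul (c := ‖ψ‖) hInt ?_ ?_
    · exact (ψ.continuous.measurable.comp hem).aestronglyMeasurable
    · exact ae_of_all _ fun t => ψ.norm_coe_le_norm _
  have hB : ∀ n, 0 ≤ ∫ t in Ioi (0:ℝ),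
      bernsteinApproximation n φ (e t) * (Real.exp (-(l * t)) * k t) := by
    intro n
    simp only [bernsteinApproximation.apply, Finset.sum_mul, smul_eq_mul]
    rw [integral_finsetSum]
    · refine Finset.sum_nonneg fun j _ => ?_
      have h1 : ∀ t ∈ Ioi (0:ℝ), bernstein n j (e t) * φ (bernstein.z j) *
          (Real.exp (-(l * t)) * k t) = (φ (bernstein.z j) * (n.choose j : ℝ)) *
          (Real.exp (-((l + (j : ℕ)) * t)) * (1 - Real.exp (-t)) ^ (n - (j : ℕ)) * k t) := by
        intro t ht
        rw [bernstein_apply, he t ht, show -((l + (j : ℕ)) * t) = -(l * t) + (j : ℕ) * (-t) by ring,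
          Real.exp_add, Real.exp_nat_mul]
        ring
      rw [setIntegral_congr_fun measurableSet_Ioi h1, integral_const_mul]
      refine mul_nonneg (mul_nonneg (hφ _) (Nat.cast_nonneg _)) (hpos _ _ ?_)
      have : (0:ℝ) ≤ (j : ℕ) := Nat.cast_nonneg _
      linarith
    · intro j _
      have := hI (bernstein n j * ContinuousMap.const _ (φ (bernstein.z j)))
      exact this
  set C := ∫ t in Ioi (0:ℝ), ‖Real.exp (-(l * t)) * k t‖ with hC
  have hC0 : 0 ≤ C := integral_nonneg fun t => norm_nonneg _
  refine le_of_forall_pos_lt_add fun ε hε => ?_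
  have hε' : 0 < ε / (C + 1) := by positivity
  obtain ⟨n, hn⟩ := ((Metric.tendsto_nhds.1 (bernsteinApproximation_uniform φ)) _ hε').exists
  have hdiff : |(∫ t in Ioi (0:ℝ), bernsteinApproximation n φ (e t) * (Real.exp (-(l * t)) * k t))
      - ∫ t in Ioi (0:ℝ), φ (e t) * (Real.exp (-(l * t)) * k t)| ≤ ε / (C + 1) * C := by
    rw [← integral_sub (hI _) (hI _), hC, ← integral_const_mul, ← Real.norm_eq_abs]
    refine norm_integral_le_of_norm_le (hInt.norm.const_mul _) (ae_of_all _ fun t => ?_)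
    rw [← sub_mul, norm_mul]
    gcongr
    rw [← dist_eq_norm]
    exact (ContinuousMap.dist_apply_le_dist _).trans hn.le
  have h2 : ε / (C + 1) * C < ε := by
    rw [div_mul_eq_mul_div, div_lt_iff₀ (by positivity)]; nlinarith
  have := abs_le.1 hdiff
  linarith [hB n]

/-- A sign criterion for a continuous function through its iterated Laplace differences. The test function
is the negative part of `k`, cut off near infinity and written as a continuous function of `exp (-t)`. -/
lemma nonneg_of_moments {k : ℝ → ℝ} {l : ℝ} (hk : ContinuousOn k (Ici 0))
    (hInt : IntegrableOn (fun t => Real.exp (-(l * t)) * k t) (Ioi 0))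
    (hpos : ∀ n : ℕ, ∀ x ≥ l,
      0 ≤ ∫ t in Ioi (0:ℝ), Real.exp (-(x * t)) * (1 - Real.exp (-t)) ^ n * k t) :
    ∀ t > 0, 0 ≤ k t := by
  intro t0 ht0
  by_contra! hneg
  set R := t0 + 1 with hR
  have hR0 : 0 < R := by linarith
  set ψ : ℝ → ℝ := fun t => max (-k t) 0 * max (R - t) 0 with hψ
  have hψc : ContinuousOn ψ (Ici 0) := by
    refine ContinuousOn.mul (hk.neg.sup continuousOn_const) ?_
    fun_prop
  set q : unitInterval → ℝ := fun x => -Real.log (max (x : ℝ) (Real.exp (-R))) with hq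
  have hqc : Continuous q := by
    refine (Continuous.log (by fun_prop) fun x => ?_).neg
    exact ne_of_gt (lt_max_of_lt_right (Real.exp_pos _))
  have hq0 : ∀ x, q x ∈ Ici (0:ℝ) := by
    intro x
    simp only [hq, mem_Ici, Left.nonneg_neg_iff]
    refine Real.log_nonpos (le_max_of_le_right (Real.exp_pos _).le) (max_le x.2.2 ?_)
    rw [Real.exp_le_one_iff]; linarith
  let φ : C(unitInterval, ℝ) := ⟨fun x => ψ (q x), hψc.comp_continuous hqc hq0⟩
  have hmem : ∀ t : ℝ, Real.exp (-(max t 0)) ∈ unitInterval := fun t =>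
    ⟨(Real.exp_pos _).le, by rw [Real.exp_le_one_iff]; simp⟩
  let e : ℝ → unitInterval := fun t => ⟨Real.exp (-(max t 0)), hmem t⟩
  have he : ∀ t > 0, (e t : ℝ) = Real.exp (-t) := by
    intro t ht
    simp only [e, max_eq_left ht.le]
  have hem : Measurable e := by
    refine Measurable.subtype_mk ?_
    fun_prop
  have hφ : ∀ x, 0 ≤ φ x := fun x => mul_nonneg (le_max_right _ _) (le_max_right _ _)
  have hφe : ∀ t > 0, φ (e t) = ψ t := by
    intro t ht
    change ψ (-Real.log (max (e t : ℝ) (Real.exp (-R)))) = ψ t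
    rw [he t ht]
    rcases le_total t R with h | h
    · rw [max_eq_left (Real.exp_le_exp.2 (by linarith)), Real.log_exp, neg_neg]
    · rw [max_eq_right (Real.exp_le_exp.2 (by linarith)), Real.log_exp, neg_neg]
      simp only [hψ]
      rw [max_eq_right (by linarith : R - R ≤ 0), max_eq_right (by linarith : R - t ≤ 0)]; simp
  have key := integral_bernstein_nonneg hInt hpos e he hem φ hφ
  set H : ℝ → ℝ := fun t => -(ψ t * (Real.exp (-(l * t)) * k t)) with hH
  have hHnn : ∀ t, 0 ≤ H t := by
    intro t
    simp only [hH, hψ]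
    rcases le_total 0 (k t) with h | h
    · rw [max_eq_right (by linarith)]; simp
    · rw [max_eq_left (by linarith)]
      have : -(-k t * max (R - t) 0 * (Real.exp (-(l * t)) * k t))
        = (k t) ^ 2 * max (R - t) 0 * Real.exp (-(l * t)) := by ring
      rw [this]; positivity
  have hHI : IntegrableOn H (Ioi 0) := by
    have h1 : IntegrableOn (fun t => φ (e t) * (Real.exp (-(l * t)) * k t)) (Ioi 0) := by
      refine Integrable.bdd_mul (c := ‖φ‖) hInt ?_ ?_
      · exact (φ.continuous.measurable.comp hem).aestronglyMeasurable
      · exact ae_of_all _ fun t => φ.norm_coe_le_norm _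
    refine h1.neg.congr ?_
    filter_upwards [ae_restrict_mem measurableSet_Ioi] with t ht
    simp only [hH, Pi.neg_apply, hφe t ht]
  have hHint : ∫ t in Ioi (0:ℝ), H t = 0 := by
    refine le_antisymm ?_ (integral_nonneg hHnn)
    rw [integral_neg, neg_nonpos]
    have h1 : ∫ t in Ioi (0:ℝ), φ (e t) * (Real.exp (-(l * t)) * k t)
        = ∫ t in Ioi (0:ℝ), ψ t * (Real.exp (-(l * t)) * k t) :=
      setIntegral_congr_fun measurableSet_Ioi (fun t ht => by simp only [hφe t ht])
    rwa [h1] at key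
  have hae := (integral_eq_zero_iff_of_nonneg hHnn hHI).1 hHint
  have hHc : ContinuousOn H (Ioi 0) := by
    have h1 := hψc.mono Ioi_subset_Ici_self
    have h2 := hk.mono (Ioi_subset_Ici_self (a := (0:ℝ)))
    have h3 : ContinuousOn (fun t : ℝ => Real.exp (-(l * t))) (Ioi 0) := by fun_prop
    exact (h1.mul (h3.mul h2)).neg
  have h0 := Measure.eqOn_open_of_ae_eq hae isOpen_Ioi hHc continuousOn_const (mem_Ioi.2 ht0)
  simp only [hH, hψ, Pi.zero_apply] at h0
  rw [max_eq_left (by linarith : (0:ℝ) ≤ -k t0), max_eq_left (by linarith : 0 ≤ R - t0),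
    show R - t0 = 1 by rw [hR]; ring] at h0
  have : 0 < (k t0) ^ 2 * Real.exp (-(l * t0)) := by
    have := sq_pos_of_neg hneg
    positivity
  nlinarith

/-- Laplace transform of `t ^ (β - 1) * mlS α β a t` at real points beyond the radius of convergence. -/
lemma ml_laplace_real {α β a x : ℝ} (hα : 1 ≤ α) (hβ : 0 < β) (ha : 0 < a) (hx : 0 < x)
    (hxa : a < x ^ α) :
    IntegrableOn (fun t => Real.exp (-(x * t)) * (t ^ (β - 1) * mlS α β a t)) (Ioi 0) ∧
    ∫ t in Ioi (0:ℝ), Real.exp (-(x * t)) * (t ^ (β - 1) * mlS α β a t)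
      = x ^ (-β) * (x ^ α / (x ^ α + a)) := by
  have hG : ∀ n : ℕ, 0 < Real.Gamma (α * n + β) := fun n => Real.Gamma_pos_of_pos (by positivity)
  have hxα : 0 < x ^ α := by positivity
  have hpow : ∀ n : ℕ, x ^ (-(α * n + β)) = x ^ (-β) * ((x ^ α)⁻¹) ^ n := by
    intro n
    rw [← Real.rpow_neg hx.le, ← Real.rpow_natCast, ← Real.rpow_mul hx.le, ← Real.rpow_add hx]
    congr 1; ring
  have hr : a / x ^ α < 1 := (div_lt_one hxα).2 hxa
  obtain ⟨h1, h2⟩ := laplace_series (fun n => (-a) ^ n / Real.Gamma (α * n + β))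
    (fun n => α * n + β) (fun n => by positivity) (x : ℂ) (by simpa using hx) (by
      simp only [Complex.ofReal_re]
      refine ((summable_geometric_of_lt_one (by positivity) hr).mul_left (x ^ (-β))).congr
        fun n => ?_
      rw [div_eq_mul_inv (_ * _), ← Real.rpow_neg hx.le, hpow, abs_div, abs_of_pos (hG n), abs_pow,
        abs_neg, abs_of_pos ha, div_mul_cancel₀ _ (hG n).ne', div_pow, div_eq_mul_inv, inv_pow]
      ring)
    (fun t => t ^ (β - 1) * mlS α β a t) (by
      intro t ht
      refine (ml_hasSum' hα hβ ha.le ht (β - 1)).congr_fun fun n => ?_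
      rw [add_sub_assoc])
  have hpt : ∀ t : ℝ, Complex.exp (-((x:ℂ) * t)) * ((t ^ (β - 1) * mlS α β a t : ℝ) : ℂ)
      = ((Real.exp (-(x * t)) * (t ^ (β - 1) * mlS α β a t) : ℝ) : ℂ) := by
    intro t; push_cast; rfl
  simp only [hpt] at h1 h2
  refine ⟨?_, ?_⟩
  · have := h1.re
    exact this
  · rw [integral_complex_ofReal] at h2
    have h3 : HasSum (fun n : ℕ => x ^ (-β) * (-(a / x ^ α)) ^ n)
        (∫ t in Ioi (0:ℝ), Real.exp (-(x * t)) * (t ^ (β - 1) * mlS α β a t)) := by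
      rw [← Complex.hasSum_ofReal]
      refine h2.congr_fun fun n => ?_
      rw [one_div, ← Complex.ofReal_inv, ← Complex.ofReal_cpow (by positivity), ← Complex.ofReal_mul,
        ← Complex.ofReal_mul]
      congr 1
      rw [Real.inv_rpow hx.le, ← Real.rpow_neg hx.le, hpow, div_mul_cancel₀ _ (hG n).ne', neg_pow a,
        neg_pow (a / _), div_pow, div_eq_mul_inv, inv_pow]
      ring
    have h4 := (hasSum_geometric_of_norm_lt_one (ξ := -(a / x ^ α)) (by
      rw [norm_neg, Real.norm_of_nonneg (by positivity)]; exact hr)).mul_left (x ^ (-β))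
    rw [h3.unique h4]
    congr 1
    rw [sub_neg_eq_add, inv_eq_one_div]
    field_simp

/-- Positivity of the Mittag-Leffler kernel for `β ≥ 3α/2`. With `κ = α / 2`, its Laplace transform
`x ^ (α - β) / (x ^ α + a)` equals
`x ^ (3κ - β) * ∫ exp (-τ x ^ κ) * (1 - cos (√a τ)) / a dτ` over `τ > 0`, a superposition with
nonnegative weights of completely monotone functions; `nonneg_of_moments` transfers the sign back. -/
lemma ml_nonneg {α β a : ℝ} (hα : 1 ≤ α) (hα2 : α ≤ 2) (hβ : 3 * (α / 2) ≤ β) (ha : 0 < a) :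
    ∀ t > 0, 0 ≤ t ^ (β - 1) * mlS α β a t := by
  set l : ℝ := max 1 (2 * a) with hl
  have hl1 : 1 ≤ l := le_max_left _ _
  have hla : ∀ x ≥ l, a < x ^ α := by
    intro x hx
    have h1 : 1 ≤ x := hl1.trans hx
    have h2 : x ^ (1:ℝ) ≤ x ^ α := Real.rpow_le_rpow_of_exponent_le h1 hα
    rw [Real.rpow_one] at h2
    have : 2 * a ≤ l := le_max_right _ _
    linarith
  set κ := α / 2 with hκ
  set δ := β - 3 * κ with hδ
  set c := Real.sqrt a with hc
  have hc2 : c ^ 2 = a := Real.sq_sqrt ha.le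
  have hκ0 : 0 < κ := by positivity
  have hrep : ∀ x ≥ l, ∫ t in Ioi (0:ℝ), Real.exp (-(x * t)) * (t ^ (β - 1) * mlS α β a t)
      = ∫ τ in Ioi (0:ℝ), (1 * x ^ (-δ) * Real.exp (-(τ * x ^ κ))) * ((1 - Real.cos (c * τ)) / a) := by
    intro x hx
    have hx0 : 0 < x := by linarith
    rw [(ml_laplace_real hα (by linarith) ha hx0 (hla x hx)).2]
    have h1 : ∀ τ : ℝ, (1 * x ^ (-δ) * Real.exp (-(τ * x ^ κ))) * ((1 - Real.cos (c * τ)) / a)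
        = (x ^ (-δ) / a) * (Real.exp (-(τ * x ^ κ)) * (1 - Real.cos (c * τ))) := by
      intro τ; ring
    simp_rw [h1]
    rw [integral_const_mul, (integral_exp_one_sub_cos (by positivity)).2, hc2]
    have h2 : (x ^ κ) ^ 2 = x ^ α := by
      rw [← Real.rpow_natCast, ← Real.rpow_mul hx0.le]; congr 1; push_cast; rw [hκ]; ring
    have h3 : x ^ (-β) * x ^ α * x ^ κ = x ^ (-δ) := by
      rw [← Real.rpow_add hx0, ← Real.rpow_add hx0]; congr 1; rw [hδ, hκ]; ring
    rw [h2, ← h3]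
    have : 0 < x ^ κ := by positivity
    have : 0 < x ^ α := by positivity
    field_simp
  have hIr : ∀ x ≥ l, IntegrableOn
      (fun τ => (1 * x ^ (-δ) * Real.exp (-(τ * x ^ κ))) * ((1 - Real.cos (c * τ)) / a)) (Ioi 0) := by
    intro x hx
    have hx0 : 0 < x := by linarith
    have h1 := (integral_exp_one_sub_cos (u := x ^ κ) (c := c) (by positivity)).1.const_mul
      (x ^ (-δ) / a)
    refine h1.congr (ae_of_all _ fun τ => ?_)
    simp only; ring
  have hIl : ∀ x ≥ l, IntegrableOn
      (fun t => Real.exp (-(x * t)) * (t ^ (β - 1) * mlS α β a t)) (Ioi 0) := fun x hx =>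
    (ml_laplace_real hα (by linarith) ha (by linarith) (hla x hx)).1
  refine nonneg_of_moments (l := l) ?_ (hIl l le_rfl) ?_
  · refine ContinuousOn.mul ?_ (ml_continuousOn hα (by linarith) ha.le)
    exact (Real.continuous_rpow_const (by linarith)).continuousOn
  · intro n x hx
    have e1 := iterate_bdiff_integral n hIl x hx
    have e2 := iterate_bdiff_integral n hIr x hx
    rw [iterate_bdiff_congr n hrep x hx, e2] at e1
    have e3 : ∀ t : ℝ, (bdiff^[n] fun y => Real.exp (-(y * t)) * (t ^ (β - 1) * mlS α β a t)) x
        = Real.exp (-(x * t)) * (1 - Real.exp (-t)) ^ n * (t ^ (β - 1) * mlS α β a t) := by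
      intro t
      rw [iterate_bdiff_mul_const, iterate_bdiff_exp]
    simp only [e3] at e1
    rw [← e1]
    refine setIntegral_nonneg measurableSet_Ioi fun τ hτ => ?_
    have hτ' : (0:ℝ) < τ := hτ
    rw [iterate_bdiff_mul_const]
    refine mul_nonneg ?_ (div_nonneg (by linarith [Real.cos_le_one (c * τ)]) ha.le)
    exact ((CMn.rpow_neg n zero_le_one (by linarith : 0 ≤ δ)).mul
      (CMn.exp_neg_rpow n hτ'.le hκ0.le (by linarith))).iterate_bdiff_nonneg x (by linarith)

/-! ### Laplace inversion and contour shift -/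

/-- Fourier inversion in Laplace form (the Bromwich formula). -/
lemma bromwich {u : ℝ → ℝ} {x : ℝ} {M : ℂ → ℂ} (hu : ContinuousOn u (Ici 0)) (hu0 : u 0 = 0)
    (hInt : IntegrableOn (fun t : ℝ => Complex.exp (-((x:ℂ) * t)) * u t) (Ioi 0))
    (hL : ∀ y : ℝ, ∫ t in Ioi (0:ℝ), Complex.exp (-(((x:ℂ) + y * Complex.I) * t)) * u t
      = M (x + y * Complex.I))
    (hM : Integrable fun y : ℝ => M (x + y * Complex.I)) {t : ℝ} (ht : 0 < t) :
    ((2 * Real.pi * u t : ℝ) : ℂ)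
      = ∫ y : ℝ, Complex.exp (((x:ℂ) + y * Complex.I) * t) * M (x + y * Complex.I) := by
  set g : ℝ → ℂ := fun t => Complex.exp (-((x:ℂ) * t)) * u (max t 0) with hg
  have hg0 : ∀ t ≤ 0, g t = 0 := by
    intro t ht
    simp only [hg, max_eq_right ht, hu0]; simp
  have hg1 : ∀ t ∈ Ioi (0:ℝ), g t = Complex.exp (-((x:ℂ) * t)) * u t := by
    intro t ht
    simp only [hg, max_eq_left (le_of_lt (mem_Ioi.1 ht))]
  have hgc : Continuous g := by
    refine Continuous.mul (by fun_prop) ?_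
    refine Complex.continuous_ofReal.comp ?_
    exact hu.comp_continuous (by fun_prop) (fun t => mem_Ici.2 (le_max_right _ _))
  have hsupp : ∀ φ : ℝ → ℂ, Function.support (fun v => φ v * g v) ⊆ Ioi 0 := by
    intro φ v hv
    by_contra h
    exact hv (by simp only [hg0 v (not_lt.1 h), mul_zero])
  have hgi : Integrable g := by
    rw [← integrableOn_iff_integrable_of_support_subset (s := Ioi 0)]
    · exact hInt.congr_fun (fun t ht => (hg1 t ht).symm) measurableSet_Ioi
    · simpa using hsupp (fun _ => 1)
  have hFg : ∀ ξ : ℝ, FourierTransform.fourier g ξ = M (x + (2 * Real.pi * ξ : ℝ) * Complex.I) := by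
    intro ξ
    rw [Real.fourier_real_eq_integral_exp_smul, ← hL]
    simp only [smul_eq_mul]
    rw [← setIntegral_eq_integral_of_forall_compl_eq_zero (s := Ioi (0:ℝ))]
    · refine setIntegral_congr_fun measurableSet_Ioi fun v hv => ?_
      simp only [hg1 v hv]
      rw [← mul_assoc, ← Complex.exp_add]
      congr 2
      push_cast; ring
    · intro v hv
      rw [hg0 v (not_lt.1 hv), mul_zero]
  have hFi : Integrable (FourierTransform.fourier g) := by
    have := hM.comp_mul_left' (R := 2 * Real.pi) (by positivity)
    refine this.congr (ae_of_all _ fun ξ => ?_)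
    simp only [hFg]
  have hinv := congrFun (hgc.fourierInv_fourier_eq hgi hFi) t
  rw [Real.fourierInv_eq'] at hinv
  have h1 : ∀ ξ : ℝ, Complex.exp (((2 * Real.pi * inner ℝ ξ t : ℝ) : ℂ) * Complex.I) •
      FourierTransform.fourier g ξ
      = (fun y : ℝ => Complex.exp ((y * Complex.I) * t) * M (x + y * Complex.I)) (2 * Real.pi * ξ) := by
    intro ξ
    rw [hFg, smul_eq_mul]
    simp only [Real.inner_apply]
    congr 2
    push_cast; ring
  rw [integral_congr_ae (ae_of_all _ h1), Measure.integral_comp_mul_left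
    (fun y : ℝ => Complex.exp ((y * Complex.I) * t) * M (x + y * Complex.I)), hg1 t ht, abs_of_pos (by positivity)] at hinv
  have h2 : ∀ y : ℝ, Complex.exp (((x:ℂ) + y * Complex.I) * t) * M (x + y * Complex.I)
      = Complex.exp ((x:ℂ) * t) * (Complex.exp ((y * Complex.I) * t) * M (x + y * Complex.I)) := by
    intro y
    rw [add_mul, Complex.exp_add]; ring
  simp only [h2]
  rw [integral_const_mul]
  have hpi : (Real.pi : ℂ) ≠ 0 := by exact_mod_cast Real.pi_ne_zero
  have h3 : ∫ y : ℝ, Complex.exp ((y * Complex.I) * t) * M (x + y * Complex.I)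
      = (2 * Real.pi : ℂ) * (Complex.exp (-((x:ℂ) * t)) * u t) := by
    rw [← hinv, Complex.real_smul]
    push_cast
    rw [← mul_assoc, mul_inv_cancel₀ (mul_ne_zero two_ne_zero hpi), one_mul]
  rw [h3, show Complex.exp ((x:ℂ) * t) * ((2 * Real.pi : ℂ) * (Complex.exp (-((x:ℂ) * t)) * u t))
    = (Complex.exp ((x:ℂ) * t) * Complex.exp (-((x:ℂ) * t))) * ((2 * Real.pi : ℂ) * u t) by ring,
    ← Complex.exp_add]
  simp

/-- Cauchy's theorem moves a vertical line of integration, given decay `B / |y|` on the horizontal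
sides of the rectangles. -/
lemma vertical_shift {F : ℂ → ℂ} {x₀ x₁ B : ℝ} (hx : x₀ ≤ x₁)
    (hF : DifferentiableOn ℂ F {s | x₀ ≤ s.re})
    (h0 : Integrable fun y : ℝ => F (x₀ + y * Complex.I))
    (h1 : Integrable fun y : ℝ => F (x₁ + y * Complex.I))
    (hB : ∀ x ∈ Icc x₀ x₁, ∀ y : ℝ, 1 ≤ |y| → ‖F (x + y * Complex.I)‖ ≤ B / |y|) :
    ∫ y : ℝ, F (x₀ + y * Complex.I) = ∫ y : ℝ, F (x₁ + y * Complex.I) := by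
  have T0 := intervalIntegral_tendsto_integral h0 tendsto_neg_atTop_atBot tendsto_id
  have T1 := intervalIntegral_tendsto_integral h1 tendsto_neg_atTop_atBot tendsto_id
  have hz : Tendsto (fun R : ℝ => (∫ y in (-R)..R, F (x₁ + y * Complex.I))
      - ∫ y in (-R)..R, F (x₀ + y * Complex.I)) atTop (𝓝 0) := by
    have hlim : Tendsto (fun R : ℝ => 2 * (B / R * |x₁ - x₀|)) atTop (𝓝 0) := by
      have : Tendsto (fun R : ℝ => B / R) atTop (𝓝 0) := tendsto_const_nhds.div_atTop tendsto_id
      simpa using (this.mul_const |x₁ - x₀|).const_mul 2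
    refine squeeze_zero_norm' ?_ hlim
    filter_upwards [eventually_ge_atTop (1:ℝ)] with R hR
    have hR0 : 0 < R := by linarith
    have hrect := Complex.integral_boundary_rect_eq_zero_of_differentiableOn F
      ((x₀ : ℂ) + (-R : ℝ) * Complex.I) ((x₁ : ℂ) + (R : ℝ) * Complex.I) (hF.mono ?_)
    swap
    · rintro s ⟨hs, -⟩
      simp only [Complex.add_re, Complex.ofReal_re, Complex.mul_re, Complex.I_re, mul_zero,
        Complex.ofReal_im, Complex.I_im, mul_one, sub_self, add_zero] at hs
      rw [mem_preimage, uIcc_of_le hx] at hs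
      exact hs.1
    simp only [Complex.add_re, Complex.ofReal_re, Complex.mul_re, Complex.I_re, mul_zero,
        Complex.ofReal_im, Complex.I_im, mul_one, sub_self, add_zero, Complex.add_im,
        Complex.mul_im, zero_add, smul_eq_mul] at hrect
    have hb : ∀ y : ℝ, |y| = R → ‖∫ v in x₀..x₁, F (v + y * Complex.I)‖ ≤ B / R * |x₁ - x₀| := by
      intro y hy
      refine intervalIntegral.norm_integral_le_of_norm_le_const fun v hv => ?_
      rw [uIoc_of_le hx] at hv
      have := hB v ⟨hv.1.le, hv.2⟩ y (by rw [hy]; exact hR)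
      rwa [hy] at this
    have e1 : Complex.I * ((∫ y in (-R)..R, F (x₁ + y * Complex.I))
      - ∫ y in (-R)..R, F (x₀ + y * Complex.I)) = (∫ v in x₀..x₁, F (v + (R:ℝ) * Complex.I)) -
        ∫ v in x₀..x₁, F (v + (-R : ℝ) * Complex.I) := by
      rw [mul_sub]; linear_combination hrect
    calc ‖(∫ y in (-R)..R, F (x₁ + y * Complex.I)) - ∫ y in (-R)..R, F (x₀ + y * Complex.I)‖
        = ‖Complex.I * ((∫ y in (-R)..R, F (x₁ + y * Complex.I))
          - ∫ y in (-R)..R, F (x₀ + y * Complex.I))‖ := by rw [norm_mul, Complex.norm_I, one_mul]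
      _ ≤ ‖∫ v in x₀..x₁, F (v + (R:ℝ) * Complex.I)‖ + ‖∫ v in x₀..x₁, F (v + (-R : ℝ) * Complex.I)‖ := by
          rw [e1]; exact norm_sub_le _ _
      _ ≤ 2 * (B / R * |x₁ - x₀|) := by
          have a1 := hb R (abs_of_pos hR0)
          have a2 := hb (-R) (by rw [abs_neg, abs_of_pos hR0])
          linarith
  have := tendsto_nhds_unique hz (T1.sub T0)
  exact (sub_eq_zero.1 this.symm).symm

/-- On the right half plane `s ^ α` stays in a sector that avoids the negative axis, so there is no
cancellation in `s ^ α + a`. -/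
lemma norm_cpow_add_ge {α a : ℝ} (hα1 : 1 < α) (hα2 : α < 2) (ha : 0 < a) :
    ∃ c > 0, ∀ s : ℂ, 0 < s.re → c * max (‖s‖ ^ α) a ≤ ‖s ^ (α:ℂ) + a‖ := by
  set q := -Real.cos (α * (Real.pi / 2)) with hq
  have hpi := Real.pi_pos
  have hq1 : q < 1 := by
    have h := Real.cos_lt_cos_of_nonneg_of_le_pi (x := α * (Real.pi / 2)) (y := Real.pi)
      (by positivity) le_rfl (by nlinarith)
    rw [Real.cos_pi] at h; linarith
  have hq0 : 0 ≤ q := by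
    have := Real.cos_nonpos_of_pi_div_two_le_of_le (x := α * (Real.pi / 2)) (by nlinarith) (by nlinarith)
    linarith
  refine ⟨Real.sqrt (1 - q), Real.sqrt_pos.2 (by linarith), fun s hs => ?_⟩
  have hs0 : s ≠ 0 := by rintro rfl; simp at hs
  set z := s ^ (α:ℂ) with hz
  have hzn : ‖z‖ = ‖s‖ ^ α := Complex.norm_cpow_real _ _
  have hzre : z.re = ‖z‖ * Real.cos (s.arg * α) := by
    rw [hz, Complex.cpow_def_of_ne_zero hs0, Complex.exp_re, Complex.norm_exp]
    congr 2
    simp [Complex.log_im]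
  have harg : |s.arg| ≤ Real.pi / 2 := Complex.abs_arg_le_pi_div_two_iff.2 hs.le
  have hcos : -q ≤ Real.cos (s.arg * α) := by
    rw [hq, neg_neg, ← Real.cos_abs (s.arg * α), abs_mul, abs_of_pos (by linarith : 0 < α), mul_comm α]
    refine Real.cos_le_cos_of_nonneg_of_le_pi (by positivity) (by nlinarith) ?_
    gcongr
  rw [← hzn]
  have hn : ‖z + a‖ ^ 2 = ‖z‖ ^ 2 + 2 * a * z.re + a ^ 2 := by
    rw [← Complex.normSq_eq_norm_sq, ← Complex.normSq_eq_norm_sq, Complex.normSq_apply, Complex.normSq_apply]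
    simp; ring
  have hz0 := norm_nonneg z
  have hlow : (1 - q) * (‖z‖ ^ 2 + a ^ 2) ≤ ‖z + a‖ ^ 2 := by
    rw [hn, hzre]
    have h1 : a * ‖z‖ * (-q) ≤ a * ‖z‖ * Real.cos (s.arg * α) := by gcongr
    have h2 : 0 ≤ q * (‖z‖ - a) ^ 2 := by positivity
    nlinarith
  refine le_of_sq_le_sq ?_ (norm_nonneg _)
  rw [mul_pow, Real.sq_sqrt (by linarith)]
  refine le_trans ?_ hlow
  refine mul_le_mul_of_nonneg_left ?_ (by linarith)
  rcases max_cases ‖z‖ a with h | h <;> rw [h.1] <;> nlinarith [sq_nonneg a, sq_nonneg ‖z‖]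

/-! ### Decay of the Mittag-Leffler function -/

lemma integrable_comp_abs_of_Ioi {h : ℝ → ℝ} (hh : IntegrableOn h (Ioi 0)) :
    Integrable fun y => h |y| := by
  have h1 : IntegrableOn (fun y => h |y|) (Ioi 0) :=
    hh.congr_fun (fun y hy => by simp only [abs_of_pos (mem_Ioi.1 hy)]) measurableSet_Ioi
  have h2 : IntegrableOn (fun x ↦ h |x|) (Iic 0) := by
    rw [← Measure.map_neg_eq_self (volume : Measure ℝ)]
    let m : MeasurableEmbedding fun x : ℝ => -x := (Homeomorph.neg ℝ).measurableEmbedding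
    rw [m.integrableOn_map_iff]
    simp_rw [Function.comp_def, abs_neg, neg_preimage, neg_Iic, neg_zero]
    exact (integrableOn_Ici_iff_integrableOn_Ioi (by simp)).2 h1
  rw [← integrableOn_univ, ← Iic_union_Ioi (a := (0:ℝ))]
  exact h2.union h1

lemma integrableOn_majorant {α β a : ℝ} (ha : 0 < a) (hβ : 0 < β) (hβα : β < α) :
    IntegrableOn (fun y : ℝ => y ^ (α - β - 1) / max (y ^ α) a) (Ioi 0) := by
  have hm : Measurable fun y : ℝ => y ^ (α - β - 1) / max (y ^ α) a := by fun_prop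
  rw [← Ioc_union_Ioi_eq_Ioi (zero_le_one (α := ℝ))]
  refine IntegrableOn.union ?_ ?_
  · have h1 : IntegrableOn (fun y : ℝ => y ^ (α - β - 1) / a) (Ioc 0 1) := by
      have := (intervalIntegral.intervalIntegrable_rpow' (a := 0) (b := 1)
        (by linarith : -1 < α - β - 1)).div_const a
      rwa [intervalIntegrable_iff_integrableOn_Ioc_of_le zero_le_one] at this
    refine h1.mono' hm.aestronglyMeasurable ?_
    filter_upwards [ae_restrict_mem measurableSet_Ioc] with y hy
    have hy0 : 0 < y := hy.1
    rw [Real.norm_of_nonneg (by positivity)]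
    gcongr
    exact le_max_right _ _
  · have h1 := integrableOn_Ioi_rpow_of_lt (by linarith : -β - 1 < -1) one_pos
    refine h1.mono' hm.aestronglyMeasurable ?_
    filter_upwards [ae_restrict_mem measurableSet_Ioi] with y hy
    have hy0 : 0 < y := lt_trans one_pos hy
    rw [Real.norm_of_nonneg (by positivity), div_le_iff₀ (by positivity)]
    calc y ^ (α - β - 1) = y ^ (-β - 1) * y ^ α := by rw [← Real.rpow_add hy0]; congr 1; ring
      _ ≤ _ := by gcongr; exact le_max_left _ _

/-- The Laplace transform of `t ^ β * mlS α β a t`, namely minus the derivative of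
`s ^ (α - β) / (s ^ α + a)`. The extra factor `t` makes it integrable along vertical lines. -/
noncomputable def mlM (α β a : ℝ) (s : ℂ) : ℂ :=
  s ^ ((α - β - 1 : ℝ) : ℂ) * (β / (s ^ (α:ℂ) + a) - a * α / (s ^ (α:ℂ) + a) ^ 2)

lemma mlM_laplace {α β a x y : ℝ} (hα : 1 ≤ α) (hβ : 0 < β) (ha : 0 < a) (hx : 0 < x)
    (hxa : a < x ^ α) :
    IntegrableOn (fun t : ℝ => Complex.exp (-(((x:ℂ) + y * Complex.I) * t)) *
      ((t ^ β * mlS α β a t : ℝ) : ℂ)) (Ioi 0) ∧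
    ∫ t in Ioi (0:ℝ), Complex.exp (-(((x:ℂ) + y * Complex.I) * t)) *
      ((t ^ β * mlS α β a t : ℝ) : ℂ) = mlM α β a (x + y * Complex.I) := by
  set s : ℂ := x + y * Complex.I with hs
  have hsre : s.re = x := by simp [hs]
  have hs0 : s ≠ 0 := by intro h; rw [h] at hsre; simp at hsre; linarith
  have hG : ∀ n : ℕ, 0 < Real.Gamma (α * n + β) := fun n => Real.Gamma_pos_of_pos (by positivity)
  have hG1 : ∀ n : ℕ, Real.Gamma (α * n + β + 1) = (α * n + β) * Real.Gamma (α * n + β) :=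
    fun n => Real.Gamma_add_one (by positivity)
  have hxα : 0 < x ^ α := by positivity
  have hr : a / x ^ α < 1 := (div_lt_one hxα).2 hxa
  have hr0 : 0 ≤ a / x ^ α := by positivity
  obtain ⟨h1, h2⟩ := laplace_series (fun n => (-a) ^ n / Real.Gamma (α * n + β))
    (fun n => α * n + β + 1) (fun n => by positivity) s (by rw [hsre]; exact hx) (by
      rw [hsre]
      have e1 := (hasSum_coe_mul_geometric_of_norm_lt_one (r := a / x ^ α)
        (by rwa [Real.norm_of_nonneg hr0])).summable.mul_left α
      have e2 := (summable_geometric_of_lt_one hr0 hr).mul_left β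
      refine ((e1.add e2).mul_left (x ^ (-β - 1))).congr fun n => ?_
      have hpow : x ^ (α * n + β + 1) = (x ^ α) ^ n * (x ^ (-β - 1))⁻¹ := by
        rw [← Real.rpow_neg hx.le, ← Real.rpow_natCast, ← Real.rpow_mul hx.le, ← Real.rpow_add hx]
        congr 1; ring
      rw [hpow, abs_div, abs_of_pos (hG n), abs_pow, abs_neg, abs_of_pos ha, hG1]
      have := (hG n).ne'
      have : 0 < x ^ (-β - 1) := by positivity
      rw [div_pow]
      field_simp)
    (fun t => t ^ β * mlS α β a t) (by
      intro t ht
      refine (ml_hasSum' hα hβ ha.le ht β).congr_fun fun n => ?_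
      rw [add_sub_cancel_right])
  refine ⟨h1, h2.unique ?_⟩
  set z : ℂ := -(a / s ^ (α:ℂ)) with hz
  have hsα : s ^ (α:ℂ) ≠ 0 := by simp [Complex.cpow_eq_zero_iff, hs0]
  have hxs : x ^ α ≤ ‖s ^ (α:ℂ)‖ := by
    rw [Complex.norm_cpow_real]
    gcongr
    rw [← hsre]; exact Complex.re_le_norm s
  have hz1 : ‖z‖ < 1 := by
    rw [hz, norm_neg, norm_div, Complex.norm_real, Real.norm_of_nonneg ha.le]
    exact (div_lt_one (hxα.trans_le hxs)).2 (hxa.trans_le hxs)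
  have hsa : s ^ (α:ℂ) + a ≠ 0 := by
    intro h
    have : s ^ (α:ℂ) = -(a:ℂ) := by linear_combination h
    rw [this, norm_neg, Complex.norm_real, Real.norm_of_nonneg ha.le] at hxs
    linarith
  have e1 := (hasSum_coe_mul_geometric_of_norm_lt_one hz1).mul_left (α:ℂ)
  have e2 := (hasSum_geometric_of_norm_lt_one hz1).mul_left (β:ℂ)
  have e3 := (e1.add e2).mul_left (s ^ ((-β - 1 : ℝ) : ℂ))
  have harg : s.arg ≠ Real.pi := by
    have : |s.arg| < Real.pi / 2 := Complex.abs_arg_lt_pi_div_two_iff.2 (Or.inl (by rw [hsre]; exact hx))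
    have := (abs_lt.1 this).2
    have := Real.pi_pos
    linarith
  have hval : s ^ ((-β - 1 : ℝ) : ℂ) * ((α:ℂ) * (z / (1 - z) ^ 2) + (β:ℂ) * (1 - z)⁻¹)
      = mlM α β a s := by
    rw [mlM]
    have hpow : s ^ ((α - β - 1 : ℝ) : ℂ) = s ^ ((-β - 1 : ℝ) : ℂ) * s ^ (α:ℂ) := by
      rw [← Complex.cpow_add _ _ hs0]; congr 1; push_cast; ring
    have hz2 : 1 - z = (s ^ (α:ℂ) + a) / s ^ (α:ℂ) := by rw [hz]; field_simp; ring
    rw [hpow, hz2, hz]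
    field_simp
    ring
  rw [hval] at e3
  refine e3.congr_fun fun n => ?_
  have hpow : (1 / s) ^ ((α * n + β + 1 : ℝ) : ℂ) = s ^ ((-β - 1 : ℝ) : ℂ) * ((s ^ (α:ℂ))⁻¹) ^ n := by
    rw [one_div, Complex.inv_cpow _ _ harg, ← Complex.cpow_neg, ← Complex.cpow_neg,
      ← Complex.cpow_nat_mul, ← Complex.cpow_add _ _ hs0]
    congr 1; push_cast; ring
  rw [hpow, hG1, hz, neg_pow (_ / _), div_pow]
  have : (Real.Gamma (α * n + β) : ℂ) ≠ 0 := by exact_mod_cast (hG n).ne'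
  push_cast
  rw [neg_pow (a:ℂ), inv_pow]
  field_simp

lemma mlM_norm_le {α β a : ℝ} (hα1 : 1 < α) (hα2 : α < 2) (hβ : 0 < β) (hαβ : α - β - 1 < 0)
    (ha : 0 < a) :
    ∃ K > 0, ∀ x : ℝ, 0 < x → ∀ y : ℝ, y ≠ 0 →
      ‖mlM α β a (x + y * Complex.I)‖ ≤ K * (|y| ^ (α - β - 1) / max (|y| ^ α) a) := by
  obtain ⟨c, hc, hcs⟩ := norm_cpow_add_ge hα1 hα2 ha
  refine ⟨β / c + α / c ^ 2, by positivity, fun x hx y hy => ?_⟩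
  set s : ℂ := x + y * Complex.I with hs
  have hsre : s.re = x := by simp [hs]
  have hsim : s.im = y := by simp [hs]
  have hy0 : 0 < |y| := abs_pos.2 hy
  have hys : |y| ≤ ‖s‖ := by rw [← hsim]; exact Complex.abs_im_le_norm s
  have hs0 : 0 < ‖s‖ := hy0.trans_le hys
  set m := max (|y| ^ α) a with hm
  have hma : a ≤ m := le_max_right _ _
  have hm0 : 0 < m := ha.trans_le hma
  have hlow : c * m ≤ ‖s ^ (α:ℂ) + a‖ := by
    refine le_trans ?_ (hcs s (by rw [hsre]; exact hx))
    rw [hm]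
    gcongr
  have h1 : ‖s ^ ((α - β - 1 : ℝ) : ℂ)‖ ≤ |y| ^ (α - β - 1) := by
    rw [Complex.norm_cpow_real]
    exact Real.rpow_le_rpow_of_nonpos hy0 hys hαβ.le
  have h2 : ‖(β:ℂ) / (s ^ (α:ℂ) + a) - a * α / (s ^ (α:ℂ) + a) ^ 2‖ ≤ (β / c + α / c ^ 2) / m := by
    refine (norm_sub_le _ _).trans ?_
    rw [norm_div, norm_div, norm_mul, norm_pow, Complex.norm_real, Complex.norm_real,
      Complex.norm_real, Real.norm_of_nonneg hβ.le, Real.norm_of_nonneg ha.le,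
      Real.norm_of_nonneg (by linarith : 0 ≤ α)]
    have a1 : β / ‖s ^ (α:ℂ) + a‖ ≤ β / (c * m) := by gcongr
    have a2 : a * α / ‖s ^ (α:ℂ) + a‖ ^ 2 ≤ m * α / (c * m) ^ 2 := by gcongr
    refine (add_le_add a1 a2).trans (le_of_eq ?_)
    field_simp
  rw [mlM, norm_mul]
  calc _ ≤ |y| ^ (α - β - 1) * ((β / c + α / c ^ 2) / m) := by gcongr
    _ = _ := by ring

lemma mlM_differentiableOn {α β a : ℝ} (hα1 : 1 < α) (hα2 : α < 2) (ha : 0 < a) :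
    DifferentiableOn ℂ (mlM α β a) {s | 0 < s.re} := by
  obtain ⟨c, hc, hcs⟩ := norm_cpow_add_ge hα1 hα2 ha
  intro s hs
  have hne : s ^ (α:ℂ) + a ≠ 0 := by
    intro h
    have := hcs s hs
    rw [h, norm_zero] at this
    have : 0 < c * max (‖s‖ ^ α) a := mul_pos hc (ha.trans_le (le_max_right _ _))
    linarith
  have hsl : s ∈ Complex.slitPlane := Or.inl hs
  have hd : ∀ r : ℂ, DifferentiableAt ℂ (fun s : ℂ => s ^ r) s := fun r =>
    differentiableAt_id.cpow (differentiableAt_const _) hsl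
  refine DifferentiableAt.differentiableWithinAt ?_
  have h1 := (hd α).add_const (a:ℂ)
  exact (hd _).mul (((differentiableAt_const _).div h1 hne).sub
    ((differentiableAt_const _).div (h1.pow 2) (pow_ne_zero 2 hne)))

/-- `t ^ β * mlS α β a t` stays bounded: in the Bromwich formula the line of integration can be moved
to the imaginary axis, along which the Laplace transform has an integrable majorant. -/
lemma ml_decay {α β a : ℝ} (hα1 : 1 < α) (hα2 : α < 2) (hβ : 0 < β) (hβα : β < α)
    (hαβ : α - β - 1 < 0) (ha : 0 < a) : ∃ C, ∀ t > 0, |t ^ β * mlS α β a t| ≤ C := by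
  obtain ⟨K, hK, hKM⟩ := mlM_norm_le hα1 hα2 hβ hαβ ha
  set m : ℝ → ℝ := fun y => K * (|y| ^ (α - β - 1) / max (|y| ^ α) a) with hm
  have hmi : Integrable m :=
    (integrable_comp_abs_of_Ioi (integrableOn_majorant ha hβ hβα)).const_mul K
  have hdiff := mlM_differentiableOn (β := β) hα1 hα2 ha
  have hy : ∀ᵐ y : ℝ, y ≠ 0 := by
    simp [ae_iff, measure_singleton]
  have hcont : ∀ x : ℝ, 0 < x → Continuous fun y : ℝ => mlM α β a (x + y * Complex.I) := by
    intro x hx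
    refine hdiff.continuousOn.comp_continuous (by fun_prop) fun y => ?_
    simpa using hx
  have hMi : ∀ x : ℝ, 0 < x → Integrable fun y : ℝ => mlM α β a (x + y * Complex.I) := by
    intro x hx
    refine hmi.mono' (hcont x hx).aestronglyMeasurable ?_
    filter_upwards [hy] with y hy
    exact hKM x hx y hy
  have hnexp : ∀ x y t : ℝ, ‖Complex.exp (((x:ℂ) + y * Complex.I) * t)‖ = Real.exp (x * t) := by
    intro x y t
    rw [Complex.norm_exp]; simp
  refine ⟨(∫ y, m y) / (2 * Real.pi), fun t ht => ?_⟩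
  set F : ℂ → ℂ := fun s => Complex.exp (s * t) * mlM α β a s with hF
  have hFi : ∀ x : ℝ, 0 < x → Integrable fun y : ℝ => F (x + y * Complex.I) := by
    intro x hx
    refine Integrable.bdd_mul (c := Real.exp (x * t)) (hMi x hx) (by fun_prop) ?_
    exact ae_of_all _ fun y => (hnexp x y t).le
  set x₁ : ℝ := max 1 (2 * a) with hx₁
  have hx1 : 1 ≤ x₁ := le_max_left _ _
  have hx1a : a < x₁ ^ α := by
    have h2 : x₁ ^ (1:ℝ) ≤ x₁ ^ α := Real.rpow_le_rpow_of_exponent_le hx1 hα1.le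
    rw [Real.rpow_one] at h2
    have : 2 * a ≤ x₁ := le_max_right _ _
    linarith
  have hL := fun y => mlM_laplace (y := y) hα1.le hβ ha (by linarith) hx1a
  have hbrom := bromwich (u := fun t => t ^ β * mlS α β a t) (x := x₁) (M := mlM α β a)
    (((Real.continuous_rpow_const hβ.le).continuousOn).mul (ml_continuousOn hα1.le hβ ha.le))
    (by simp [Real.zero_rpow hβ.ne'])
    (by simpa using (hL 0).1) (fun y => (hL y).2) (hMi x₁ (by linarith)) ht
  have hbound : ∀ ε > 0, ε ≤ 1 → 2 * Real.pi * |t ^ β * mlS α β a t| ≤ Real.exp (ε * t) * ∫ y, m y := by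
    intro ε hε hε1
    have hshift := vertical_shift (F := F) (x₀ := ε) (x₁ := x₁) (B := Real.exp (x₁ * t) * K)
      (by linarith) ?_ (hFi ε hε) (hFi x₁ (by linarith)) ?_
    · have h1 : ‖∫ y : ℝ, F (ε + y * Complex.I)‖ ≤ ∫ y, Real.exp (ε * t) * m y := by
        refine norm_integral_le_of_norm_le (hmi.const_mul _) ?_
        filter_upwards [hy] with y hy
        rw [hF]
        simp only [norm_mul]
        rw [hnexp]
        gcongr
        exact hKM ε hε y hy
      rw [integral_const_mul] at h1
      rw [hshift, ← hbrom, Complex.norm_real, Real.norm_eq_abs, abs_mul,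
        abs_of_pos (by positivity : 0 < 2 * Real.pi)] at h1
      exact h1
    · refine DifferentiableOn.mul (by fun_prop) (hdiff.mono fun s hs => ?_)
      exact hε.trans_le hs
    · intro x hx y hy1
      have hy0 : 0 < |y| := by linarith
      rw [hF]
      simp only [norm_mul]
      rw [hnexp, mul_div_assoc]
      have hxt : Real.exp (x * t) ≤ Real.exp (x₁ * t) := by
        rw [Real.exp_le_exp]; exact mul_le_mul_of_nonneg_right hx.2 ht.le
      refine mul_le_mul hxt ((hKM x (hε.trans_le hx.1) y (abs_pos.1 hy0)).trans ?_) (norm_nonneg _)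
        (Real.exp_pos _).le
      rw [div_eq_mul_inv K]
      gcongr
      rw [div_le_iff₀ (by positivity)]
      calc |y| ^ (α - β - 1) = |y|⁻¹ * |y| ^ (α - β) := by
            rw [← Real.rpow_neg_one, ← Real.rpow_add hy0]; congr 1; ring
        _ ≤ |y|⁻¹ * |y| ^ α := by
            gcongr
            linarith
        _ ≤ _ := by gcongr; exact le_max_left _ _
  have hlim : Tendsto (fun ε : ℝ => Real.exp (ε * t) * ∫ y, m y) (𝓝[>] 0)
      (𝓝 (Real.exp (0 * t) * ∫ y, m y)) := by
    refine Tendsto.mono_left ?_ nhdsWithin_le_nhds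
    exact (Continuous.tendsto (by fun_prop) 0)
  rw [zero_mul, Real.exp_zero, one_mul] at hlim
  rw [le_div_iff₀ (by positivity), mul_comm]
  refine ge_of_tendsto hlim ?_
  filter_upwards [Ioc_mem_nhdsGT (zero_lt_one (α := ℝ))] with ε hε
  exact hbound ε hε.1 hε.2

/-! ### Semigroup property of fractional integrals -/

lemma beta_real {σ τ L : ℝ} (hσ : 0 < σ) (hτ : 0 < τ) (hL : 0 < L) :
    ∫ x in (0:ℝ)..L, x ^ (τ - 1) * (L - x) ^ (σ - 1)
      = L ^ (τ + σ - 1) * (Real.Gamma τ * Real.Gamma σ / Real.Gamma (τ + σ)) := by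
  apply Complex.ofReal_injective
  rw [← intervalIntegral.integral_ofReal]
  have h1 : ∫ x in (0:ℝ)..L, ((x ^ (τ - 1) * (L - x) ^ (σ - 1) : ℝ) : ℂ)
      = ∫ x in (0:ℝ)..L, (x:ℂ) ^ ((τ:ℂ) - 1) * ((L:ℂ) - x) ^ ((σ:ℂ) - 1) := by
    refine intervalIntegral.integral_congr fun x hx => ?_
    rw [uIcc_of_le hL.le] at hx
    simp only [Complex.ofReal_mul]
    rw [Complex.ofReal_cpow hx.1, Complex.ofReal_cpow (by linarith [hx.2])]
    push_cast; rfl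
  rw [h1, Complex.betaIntegral_scaled _ _ hL]
  have h2 := Complex.Gamma_mul_Gamma_eq_betaIntegral (s := τ) (t := σ) (by simpa) (by simpa)
  have hG : Complex.Gamma ((τ:ℂ) + σ) ≠ 0 := by
    rw [← Complex.ofReal_add, Complex.Gamma_ofReal]
    exact_mod_cast (Real.Gamma_pos_of_pos (by linarith)).ne'
  push_cast
  rw [Complex.ofReal_cpow hL.le]
  push_cast [← Complex.Gamma_ofReal]
  rw [h2]
  field_simp

lemma beta_shift {σ τ r t : ℝ} (hσ : 0 < σ) (hτ : 0 < τ) (hrt : r < t) :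
    IntervalIntegrable (fun s => (t - s) ^ (σ - 1) * (s - r) ^ (τ - 1)) volume r t ∧
    ∫ s in r..t, (t - s) ^ (σ - 1) * (s - r) ^ (τ - 1)
      = (t - r) ^ (σ + τ - 1) * (Real.Gamma σ * Real.Gamma τ / Real.Gamma (σ + τ)) := by
  have h1 : ∫ s in r..t, (t - s) ^ (σ - 1) * (s - r) ^ (τ - 1)
      = (t - r) ^ (σ + τ - 1) * (Real.Gamma σ * Real.Gamma τ / Real.Gamma (σ + τ)) := by
    have h := intervalIntegral.integral_comp_sub_right (a := r) (b := t)
      (fun x => x ^ (τ - 1) * ((t - r) - x) ^ (σ - 1)) r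
    rw [sub_self, beta_real hσ hτ (by linarith : 0 < t - r)] at h
    rw [add_comm σ τ, mul_comm (Real.Gamma σ), ← h]
    refine intervalIntegral.integral_congr fun s _ => ?_
    rw [mul_comm, show t - r - (s - r) = t - s by ring]
  refine ⟨?_, h1⟩
  refine intervalIntegral.intervalIntegrable_of_integral_ne_zero ?_
  rw [h1]
  have := Real.Gamma_pos_of_pos hσ
  have := Real.Gamma_pos_of_pos hτ
  have := Real.Gamma_pos_of_pos (add_pos hσ hτ)
  have : 0 < t - r := by linarith
  positivity

/-- Fubini on the triangle `0 < r < s < t`, in unnormalized form. The condition `1 ≤ σ + τ` bounds the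
resulting kernel, so that the identity holds at every `t` and not just almost everywhere. -/
lemma triangle_fubini {σ τ t : ℝ} {u : ℝ → ℝ} (hσ : 0 < σ) (hτ : 0 < τ) (hστ : 1 ≤ σ + τ)
    (ht : 0 < t) (hu : IntervalIntegrable u volume 0 t) :
    IntervalIntegrable (fun s => (t - s) ^ (σ - 1) * ∫ r in (0:ℝ)..s, (s - r) ^ (τ - 1) * u r)
      volume 0 t ∧
    ∫ s in (0:ℝ)..t, (t - s) ^ (σ - 1) * ∫ r in (0:ℝ)..s, (s - r) ^ (τ - 1) * u r
      = (Real.Gamma σ * Real.Gamma τ / Real.Gamma (σ + τ)) *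
        ∫ r in (0:ℝ)..t, (t - r) ^ (σ + τ - 1) * u r := by
  set B := Real.Gamma σ * Real.Gamma τ / Real.Gamma (σ + τ) with hB
  set μ := volume.restrict (Ioo (0:ℝ) t) with hμ
  set k : ℝ → ℝ → ℝ := fun r s => (Ioi r).indicator (fun s => (t - s) ^ (σ - 1) * (s - r) ^ (τ - 1)) s
    with hk
  rw [intervalIntegrable_iff_integrableOn_Ioo_of_le ht.le] at hu
  have hkm : Measurable fun z : ℝ × ℝ => k z.1 z.2 := by
    have : (fun z : ℝ × ℝ => k z.1 z.2) = {z : ℝ × ℝ | z.1 < z.2}.indicator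
        (fun z => (t - z.2) ^ (σ - 1) * (z.2 - z.1) ^ (τ - 1)) := by
      funext z
      simp only [hk, indicator, mem_Ioi, mem_ofPred_eq]
    rw [this]
    refine Measurable.indicator (by fun_prop) ?_
    exact measurableSet_lt measurable_fst measurable_snd
  have hk0 : ∀ r s, s ≤ t → 0 ≤ k r s := by
    intro r s hs
    simp only [hk]
    refine indicator_apply_nonneg fun h => ?_
    have h' : r < s := h
    have h1 : 0 ≤ t - s := by linarith
    have h2 : 0 ≤ s - r := by linarith
    positivity
  have hkr : ∀ r ∈ Ioo (0:ℝ) t, Integrable (k r) μ ∧ ∫ s, k r s ∂μ = (t - r) ^ (σ + τ - 1) * B := by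
    intro r hr
    obtain ⟨h1, h2⟩ := beta_shift hσ hτ hr.2
    have hset : μ.restrict (Ioi r) = volume.restrict (Ioo r t) := by
      rw [hμ, Measure.restrict_restrict measurableSet_Ioi]
      congr 1
      ext s
      simp only [mem_inter_iff, mem_Ioi, mem_Ioo]
      exact ⟨fun h => ⟨h.1, h.2.2⟩, fun h => ⟨h.1, hr.1.trans h.1, h.2⟩⟩
    refine ⟨?_, ?_⟩
    · simp only [hk]
      rw [integrable_indicator_iff measurableSet_Ioi, IntegrableOn, hset]
      exact (intervalIntegrable_iff_integrableOn_Ioo_of_le hr.2.le).1 h1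
    · simp only [hk]
      rw [integral_indicator measurableSet_Ioi, hset, ← integral_Ioc_eq_integral_Ioo,
        ← intervalIntegral.integral_of_le hr.2.le, h2]
  have hkey : Integrable (fun z : ℝ × ℝ => k z.1 z.2 * u z.1) (μ.prod μ) := by
    have hm : AEStronglyMeasurable (fun z : ℝ × ℝ => k z.1 z.2 * u z.1) (μ.prod μ) :=
      hkm.aestronglyMeasurable.mul hu.aestronglyMeasurable.comp_fst
    rw [integrable_prod_iff hm]
    refine ⟨?_, ?_⟩
    · filter_upwards [ae_restrict_mem measurableSet_Ioo] with r hr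
      exact (hkr r hr).1.mul_const _
    · have h1 : Integrable (fun r => ((t - r) ^ (σ + τ - 1) * B) * ‖u r‖) μ := by
        refine Integrable.bdd_mul (c := t ^ (σ + τ - 1) * B) hu.norm ?_ ?_
        · exact Measurable.aestronglyMeasurable (by fun_prop)
        · filter_upwards [ae_restrict_mem measurableSet_Ioo] with r hr
          have h2 : 0 ≤ t - r := by linarith [hr.2]
          have hB0 : 0 < B := by
            have := Real.Gamma_pos_of_pos hσ
            have := Real.Gamma_pos_of_pos hτ
            have := Real.Gamma_pos_of_pos (add_pos hσ hτ)
            positivity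
          rw [Real.norm_of_nonneg (by positivity)]
          gcongr
          linarith [hr.1]
      refine h1.congr ?_
      filter_upwards [ae_restrict_mem measurableSet_Ioo] with r hr
      simp only [norm_mul]
      rw [integral_mul_const, ← (hkr r hr).2]
      congr 1
      refine setIntegral_congr_fun measurableSet_Ioo fun s hs => ?_
      exact (Real.norm_of_nonneg (hk0 r s hs.2.le)).symm
  have hinner : ∀ s ∈ Ioo (0:ℝ) t, ∫ r, k r s * u r ∂μ
      = (t - s) ^ (σ - 1) * ∫ r in (0:ℝ)..s, (s - r) ^ (τ - 1) * u r := by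
    intro s hs
    have hset : μ.restrict (Iio s) = volume.restrict (Ioo 0 s) := by
      rw [hμ, Measure.restrict_restrict measurableSet_Iio]
      congr 1
      ext r
      simp only [mem_inter_iff, mem_Iio, mem_Ioo]
      exact ⟨fun h => ⟨h.2.1, h.1⟩, fun h => ⟨h.2, h.1, h.2.trans hs.2⟩⟩
    have h1 : ∀ r, k r s * u r = (Iio s).indicator
        (fun r => (t - s) ^ (σ - 1) * ((s - r) ^ (τ - 1) * u r)) r := by
      intro r
      simp only [hk, indicator, mem_Ioi, mem_Iio]
      split_ifs
      · ring
      · simp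
    simp only [h1]
    rw [integral_indicator measurableSet_Iio, hset, integral_const_mul,
      intervalIntegral.integral_of_le hs.1.le, integral_Ioc_eq_integral_Ioo]
  have hI : IntegrableOn (fun s => (t - s) ^ (σ - 1) * ∫ r in (0:ℝ)..s, (s - r) ^ (τ - 1) * u r)
      (Ioo 0 t) := by
    refine hkey.integral_prod_right.congr ?_
    filter_upwards [ae_restrict_mem measurableSet_Ioo] with s hs
    exact hinner s hs
  refine ⟨(intervalIntegrable_iff_integrableOn_Ioo_of_le ht.le).2 hI, ?_⟩
  rw [intervalIntegral.integral_of_le ht.le, intervalIntegral.integral_of_le ht.le,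
    integral_Ioc_eq_integral_Ioo, integral_Ioc_eq_integral_Ioo, ← integral_const_mul]
  have hsw := integral_integral_swap (f := fun r s => k r s * u r) hkey
  rw [← setIntegral_congr_fun measurableSet_Ioo hinner, ← hsw]
  refine setIntegral_congr_fun measurableSet_Ioo fun r hr => ?_
  rw [integral_mul_const, (hkr r hr).2]
  ring

lemma rlInt_semigroup {σ τ t : ℝ} {u : ℝ → ℝ} (hσ : 0 < σ) (hτ : 0 < τ) (hστ : 1 ≤ σ + τ)
    (ht : 0 < t) (hu : IntervalIntegrable u volume 0 t) :
    rlInt σ (rlInt τ u) t = rlInt (σ + τ) u t := by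
  have h := (triangle_fubini hσ hτ hστ ht hu).2
  have hG1 := (Real.Gamma_pos_of_pos hσ).ne'
  have hG2 := (Real.Gamma_pos_of_pos hτ).ne'
  have hG3 := (Real.Gamma_pos_of_pos (add_pos hσ hτ)).ne'
  have e : ∀ s, (t - s) ^ (σ - 1) * rlInt τ u s = (1 / Real.Gamma τ) *
      ((t - s) ^ (σ - 1) * ∫ r in (0:ℝ)..s, (s - r) ^ (τ - 1) * u r) := by
    intro s; rw [rlInt]; ring
  rw [rlInt]
  simp only [e]
  rw [intervalIntegral.integral_const_mul, h, rlInt]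
  field_simp

lemma rlInt_one (u : ℝ → ℝ) (t : ℝ) : rlInt 1 u t = ∫ s in (0:ℝ)..t, u s := by
  simp [rlInt]

/-- Fractional integrals of locally integrable functions are locally integrable. -/
lemma rlInt_intervalIntegrable {τ t : ℝ} {u : ℝ → ℝ} (hτ : 0 < τ)
    (ht : 0 < t) (hu : IntervalIntegrable u volume 0 t) :
    IntervalIntegrable (rlInt τ u) volume 0 t := by
  have h := (triangle_fubini one_pos hτ (by linarith) ht hu).1
  simp only [sub_self, Real.rpow_zero, one_mul] at h
  exact h.const_mul _

lemma rlInt_kernel_integrable {σ τ t : ℝ} {u : ℝ → ℝ} (hσ : 0 < σ) (hτ : 0 < τ) (hστ : 1 ≤ σ + τ)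
    (ht : 0 < t) (hu : IntervalIntegrable u volume 0 t) :
    IntervalIntegrable (fun s => (t - s) ^ (σ - 1) * rlInt τ u s) volume 0 t := by
  have h := (triangle_fubini hσ hτ hστ ht hu).1.const_mul (1 / Real.Gamma τ)
  refine h.congr (fun s _ => ?_)
  simp only [rlInt]; ring

/-- For orders at least one the kernel is bounded. -/
lemma kernel_integrable_of_one_le {σ t : ℝ} {u : ℝ → ℝ} (hσ : 1 ≤ σ)
    (hu : IntervalIntegrable u volume 0 t) :
    IntervalIntegrable (fun s => (t - s) ^ (σ - 1) * u s) volume 0 t := by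
  refine hu.continuousOn_mul ?_
  exact ((Real.continuous_rpow_const (by linarith)).comp (by fun_prop)).continuousOn

/-! ### From the Caputo equation to the Volterra equation -/

lemma rlInt_congr {σ t : ℝ} {u v : ℝ → ℝ} (ht : 0 ≤ t) (h : ∀ᵐ s, s ∈ Ioo 0 t → u s = v s) :
    rlInt σ u t = rlInt σ v t := by
  rw [rlInt, rlInt]
  congr 1
  rw [intervalIntegral.integral_of_le ht, intervalIntegral.integral_of_le ht,
    integral_Ioc_eq_integral_Ioo, integral_Ioc_eq_integral_Ioo]
  refine setIntegral_congr_ae measurableSet_Ioo ?_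
  filter_upwards [h] with s hs hst
  rw [hs hst]

lemma rlInt_sub {σ t : ℝ} {u v : ℝ → ℝ}
    (hu : IntervalIntegrable (fun s => (t - s) ^ (σ - 1) * u s) volume 0 t)
    (hv : IntervalIntegrable (fun s => (t - s) ^ (σ - 1) * v s) volume 0 t) (c : ℝ) :
    rlInt σ (fun s => u s - c * v s) t = rlInt σ u t - c * rlInt σ v t := by
  rw [rlInt, rlInt, rlInt]
  have : ∀ s, (t - s) ^ (σ - 1) * (u s - c * v s)
      = (t - s) ^ (σ - 1) * u s - c * ((t - s) ^ (σ - 1) * v s) := fun s => by ring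
  simp only [this]
  rw [intervalIntegral.integral_sub hu (hv.const_mul c), intervalIntegral.integral_const_mul]
  ring

/-- The fractional integral of positive order of a function vanishing to first order at `0` has zero
derivative at `0`. Only the right difference quotient is estimated; existence of the derivative is
assumed. -/
lemma deriv_rlInt_zero {σ : ℝ} {h : ℝ → ℝ} (hσ : 0 < σ) (h0 : h 0 = 0)
    (hd : HasDerivAt h 0 0) (hG : DifferentiableAt ℝ (rlInt σ h) 0) :
    deriv (rlInt σ h) 0 = 0 := by
  have hG0 : rlInt σ h 0 = 0 := by simp [rlInt]
  have h1 := hG.hasDerivAt.hasDerivWithinAt (s := Ioi 0)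
  rw [hasDerivWithinAt_iff_tendsto_slope' (by simp)] at h1
  have hGσ := Real.Gamma_pos_of_pos hσ
  have hsmall : ∀ᶠ s in 𝓝 (0:ℝ), |h s| ≤ |s| := by
    have := (hasDerivAt_iff_isLittleO.1 hd).def one_pos
    filter_upwards [this] with s hs
    simpa [h0] using hs
  obtain ⟨δ, hδ, hδs⟩ := Metric.eventually_nhds_iff.1 hsmall
  have h2 : Tendsto (slope (rlInt σ h) 0) (𝓝[>] 0) (𝓝 0) := by
    have hlim : Tendsto (fun t : ℝ => (1 / Real.Gamma σ) * (t ^ σ / σ)) (𝓝[>] 0) (𝓝 0) := by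
      have : Tendsto (fun t : ℝ => (1 / Real.Gamma σ) * (t ^ σ / σ)) (𝓝 0)
          (𝓝 ((1 / Real.Gamma σ) * ((0:ℝ) ^ σ / σ))) :=
        (((Real.continuous_rpow_const hσ.le).tendsto 0).div_const σ).const_mul _
      rw [Real.zero_rpow hσ.ne', zero_div, mul_zero] at this
      exact this.mono_left nhdsWithin_le_nhds
    refine squeeze_zero_norm' ?_ hlim
    filter_upwards [Ioo_mem_nhdsGT hδ] with t ht
    have ht0 : 0 < t := ht.1
    have hker : IntervalIntegrable (fun s => (t - s) ^ (σ - 1)) volume 0 t := by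
      have := (intervalIntegral.intervalIntegrable_rpow' (a := 0) (b := t)
        (by linarith : -1 < σ - 1)).comp_sub_left t
      simpa using this.symm
    have hkint : ∫ s in (0:ℝ)..t, (t - s) ^ (σ - 1) = t ^ σ / σ := by
      rw [intervalIntegral.integral_comp_sub_left (fun x => x ^ (σ - 1)) t, sub_self, sub_zero,
        integral_rpow (Or.inl (by linarith)), sub_add_cancel, Real.zero_rpow hσ.ne', sub_zero]
    have hb : ‖∫ s in (0:ℝ)..t, (t - s) ^ (σ - 1) * h s‖ ≤ ∫ s in (0:ℝ)..t, t * (t - s) ^ (σ - 1) := by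
      refine intervalIntegral.norm_integral_le_of_norm_le ht0.le ?_ (hker.const_mul t)
      refine ae_of_all _ fun s hs => ?_
      have hs1 : 0 ≤ t - s := by linarith [hs.2]
      rw [norm_mul, Real.norm_of_nonneg (by positivity), mul_comm]
      gcongr
      have : |h s| ≤ |s| := hδs (by
        rw [Real.dist_eq, sub_zero, abs_of_pos hs.1]; linarith [hs.2, ht.2])
      rw [Real.norm_eq_abs]
      rw [abs_of_pos hs.1] at this
      linarith [hs.2]
    rw [intervalIntegral.integral_const_mul, hkint] at hb
    rw [slope_def_field, hG0, sub_zero, sub_zero, norm_div, Real.norm_of_nonneg ht0.le,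
      div_le_iff₀ ht0, rlInt, norm_mul, Real.norm_of_nonneg (by positivity)]
    calc _ ≤ 1 / Real.Gamma σ * (t * (t ^ σ / σ)) := by gcongr
      _ = _ := by ring
  exact tendsto_nhds_unique h1 h2

lemma continuousOn_rlInt_of_one_lt {σ : ℝ} {v : ℝ → ℝ} (hσ : 1 < σ)
    (hv : ∀ T > (0:ℝ), IntervalIntegrable v volume 0 T) : ContinuousOn (rlInt σ v) (Ioi 0) := by
  intro t ht
  have ht' : (0:ℝ) < t := ht
  have hT : (0:ℝ) < t + 1 := by linarith
  have hg := rlInt_intervalIntegrable (τ := σ - 1) (by linarith) hT (hv _ hT)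
  have h1 := intervalIntegral.continuousOn_primitive_interval' hg left_mem_uIcc
  rw [uIcc_of_le hT.le] at h1
  have h2 : ContinuousAt (fun s => ∫ r in (0:ℝ)..s, rlInt (σ - 1) v r) t :=
    h1.continuousAt (Icc_mem_nhds ht' (by linarith))
  refine ContinuousAt.continuousWithinAt (h2.congr ?_)
  filter_upwards [Ioi_mem_nhds ht'] with s hs
  rw [← rlInt_one, rlInt_semigroup one_pos (by linarith) (by linarith) hs (hv s hs)]
  congr 1; ring

/-- Functions continuous on `(0, ∞)` with the same primitive agree there. -/
lemma eq_of_rlInt_one_eq {h q : ℝ → ℝ} (hh : ContinuousOn h (Ioi 0)) (hq : ContinuousOn q (Ioi 0))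
    (hhi : ∀ T > (0:ℝ), IntervalIntegrable h volume 0 T)
    (hqi : ∀ T > (0:ℝ), IntervalIntegrable q volume 0 T)
    (heq : ∀ t > 0, rlInt 1 h t = rlInt 1 q t) : ∀ t > 0, h t = q t := by
  intro t ht
  have hmem : Ioi (0:ℝ) ∈ 𝓝 t := Ioi_mem_nhds ht
  have d1 := intervalIntegral.integral_hasDerivAt_right (hhi t ht)
    (hh.stronglyMeasurableAtFilter isOpen_Ioi t ht) (hh.continuousAt hmem)
  have d2 := intervalIntegral.integral_hasDerivAt_right (hqi t ht)
    (hq.stronglyMeasurableAtFilter isOpen_Ioi t ht) (hq.continuousAt hmem)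
  refine d1.unique (d2.congr_of_eventuallyEq ?_)
  filter_upwards [hmem] with s hs
  simpa [rlInt_one] using heq s hs

/-- The Caputo equation in integrated form. Integrating twice gives `I^{2-α} h = I^2 v` with
`h = w - w'(0) s - w(0)` and `v = I^γ f - a w`; applying `I^{α-1}` and differentiating gives
`h = I^α v`. -/
lemma volterra {γ α a : ℝ} {f w : ℝ → ℝ} (hγ : 0 < γ) (hα1 : 1 < α) (hα2 : α < 2)
    (hf : ∀ T > (0:ℝ), IntervalIntegrable f volume 0 T) (hw : ContDiff ℝ 1 w)
    (hAC : ∀ T > (0:ℝ), AC2On (capKernel α w) T)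
    (heq : ∀ᵐ t ∂(volume.restrict (Ici (0:ℝ))), caputoD α w t + a * w t = rlInt γ f t) :
    ∀ t > 0, w t = w 0 + deriv w 0 * t + rlInt (α + γ) f t - a * rlInt α w t := by
  set h : ℝ → ℝ := fun s => w s - deriv w 0 * s - w 0 with hh
  have hwc : Continuous w := hw.continuous
  have hhc : Continuous h := by fun_prop
  have hcap : capKernel α w = rlInt (2 - α) h := by
    rw [capKernel, if_neg hα2.ne]
  have hwd : HasDerivAt w (deriv w 0) 0 := (hw.differentiable (by norm_num) 0).hasDerivAt
  have hhd : HasDerivAt h 0 0 := by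
    have := (hwd.sub ((hasDerivAt_id (0:ℝ)).const_mul (deriv w 0))).sub_const (w 0)
    simpa [hh] using this
  set v : ℝ → ℝ := fun s => rlInt γ f s - a * w s with hv
  have hwi : ∀ T > (0:ℝ), IntervalIntegrable w volume 0 T := fun T _ => hwc.intervalIntegrable _ _
  have hhi : ∀ T > (0:ℝ), IntervalIntegrable h volume 0 T := fun T _ => hhc.intervalIntegrable _ _
  have hfi : ∀ T > (0:ℝ), IntervalIntegrable (rlInt γ f) volume 0 T := fun T hT =>
    rlInt_intervalIntegrable hγ hT (hf T hT)
  have hvi : ∀ T > (0:ℝ), IntervalIntegrable v volume 0 T := fun T hT =>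
    (hfi T hT).sub ((hwi T hT).const_mul a)
  rw [hcap] at hAC
  have hD0 : deriv (rlInt (2 - α) h) 0 = 0 :=
    deriv_rlInt_zero (by linarith) (by simp [hh]) hhd
      ((hAC 1 one_pos).1 0 ⟨le_rfl, zero_le_one⟩)
  have heq' : ∀ᵐ s, s ∈ Ici (0:ℝ) → deriv (deriv (rlInt (2 - α) h)) s = v s := by
    rw [← ae_restrict_iff' measurableSet_Ici]
    filter_upwards [heq] with s hs
    rw [caputoD, hcap] at hs
    simp only [hv]; linarith
  have hG1 : ∀ t, 0 ≤ t → deriv (rlInt (2 - α) h) t = rlInt 1 v t := by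
    intro t ht
    have := (hAC (t + 1) (by linarith)).2.2 t ⟨ht, by linarith⟩
    rw [this, hD0, zero_add, ← rlInt_one]
    refine rlInt_congr ht ?_
    filter_upwards [heq'] with s hs hst
    exact hs hst.1.le
  have hG2 : ∀ t > 0, rlInt (2 - α) h t = rlInt 2 v t := by
    intro t ht
    have hi1 : IntervalIntegrable (rlInt 1 v) volume 0 t :=
      rlInt_intervalIntegrable one_pos ht (hvi t ht)
    have h1 := intervalIntegral.integral_eq_sub_of_hasDerivAt (a := 0) (b := t)
      (f := rlInt (2 - α) h) (f' := rlInt 1 v) (fun s hs => by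
        rw [uIcc_of_le ht.le] at hs
        rw [← hG1 s hs.1]
        exact ((hAC t ht).1 s hs).hasDerivAt) hi1
    have h0 : rlInt (2 - α) h 0 = 0 := by simp [rlInt]
    rw [h0, sub_zero, ← rlInt_one, rlInt_semigroup one_pos one_pos (by norm_num) ht (hvi t ht)] at h1
    rw [← h1]; norm_num
  have hE : ∀ t > 0, rlInt 1 h t = rlInt 1 (rlInt α v) t := by
    intro t ht
    have e1 := rlInt_semigroup (σ := α - 1) (τ := 2 - α) (by linarith) (by linarith) (by linarith) ht
      (hhi t ht)
    have e2 := rlInt_semigroup (σ := α - 1) (τ := 2) (by linarith) (by linarith) (by linarith) ht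
      (hvi t ht)
    have e3 := rlInt_semigroup (σ := 1) (τ := α) (by linarith) (by linarith) (by linarith) ht
      (hvi t ht)
    have e4 : rlInt (α - 1) (rlInt (2 - α) h) t = rlInt (α - 1) (rlInt 2 v) t :=
      rlInt_congr ht.le (ae_of_all _ fun s hs => hG2 s hs.1)
    rw [e3, show (1:ℝ) + α = α - 1 + 2 by ring, ← e2, ← e4, e1]
    congr 1; ring
  have hfin := eq_of_rlInt_one_eq hhc.continuousOn (continuousOn_rlInt_of_one_lt hα1 hvi) hhi
    (fun T hT => rlInt_intervalIntegrable (by linarith) hT (hvi T hT)) hE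
  intro t ht
  have h1 := hfin t ht
  rw [hv, rlInt_sub (kernel_integrable_of_one_le hα1.le (hfi t ht))
    (kernel_integrable_of_one_le hα1.le (hwi t ht)),
    rlInt_semigroup (by linarith) hγ (by linarith) ht (hf t ht)] at h1
  simp only [hh] at h1
  linarith

/-! ### Representation and lower bound of the solution -/

lemma rlInt_const {σ t : ℝ} (hσ : 0 < σ) (ht : 0 < t) :
    rlInt σ (fun _ => 1) t = t ^ σ / Real.Gamma (σ + 1) := by
  have h := (beta_shift hσ one_pos ht).2
  have hG := (Real.Gamma_pos_of_pos hσ).ne'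
  simp only [sub_self, Real.rpow_zero, sub_zero, add_sub_cancel_right, Real.Gamma_one] at h
  rw [rlInt, h]
  field_simp

lemma rlInt_id {σ t : ℝ} (hσ : 0 < σ) (ht : 0 < t) :
    rlInt σ (fun s => s) t = t ^ (σ + 1) / Real.Gamma (σ + 2) := by
  have h := (beta_shift hσ two_pos ht).2
  have hG := (Real.Gamma_pos_of_pos hσ).ne'
  simp only [sub_zero, Real.Gamma_two, show (2:ℝ) - 1 = 1 by norm_num, Real.rpow_one,
    show σ + 2 - 1 = σ + 1 by ring] at h
  rw [rlInt, h]
  field_simp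

/-- Fractional integration of order at least one of the Volterra equation. -/
lemma rlInt_volterra {σ α β a c₀ c₁ : ℝ} {f w : ℝ → ℝ} (hσ : 1 ≤ σ) (hα : 0 < α) (hβ : 0 < β)
    (hf : ∀ T > (0:ℝ), IntervalIntegrable f volume 0 T)
    (hw : ∀ T > (0:ℝ), IntervalIntegrable w volume 0 T)
    (hv : ∀ t > 0, w t = c₀ + c₁ * t + rlInt β f t - a * rlInt α w t) {t : ℝ} (ht : 0 < t) :
    rlInt σ w t = c₀ * (t ^ σ / Real.Gamma (σ + 1)) + c₁ * (t ^ (σ + 1) / Real.Gamma (σ + 2))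
      + rlInt (σ + β) f t - a * rlInt (σ + α) w t := by
  have hσ0 : 0 < σ := by linarith
  have i0 : IntervalIntegrable (fun s => (t - s) ^ (σ - 1) * (fun _ => (1:ℝ)) s) volume 0 t :=
    kernel_integrable_of_one_le hσ (by simp)
  have i1 : IntervalIntegrable (fun s => (t - s) ^ (σ - 1) * (fun s => s) s) volume 0 t :=
    kernel_integrable_of_one_le hσ (continuous_id.intervalIntegrable _ _)
  have i2 := kernel_integrable_of_one_le hσ (rlInt_intervalIntegrable hβ ht (hf t ht))
  have i3 := kernel_integrable_of_one_le hσ (rlInt_intervalIntegrable hα ht (hw t ht))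
  rw [rlInt_congr (v := fun s => ((rlInt β f s - (-c₀) * 1) - (-c₁) * s) - a * rlInt α w s) ht.le
    (ae_of_all _ fun s hs => by rw [hv s hs.1]; ring)]
  have j1 : IntervalIntegrable (fun s => (t - s) ^ (σ - 1) * (rlInt β f s - (-c₀) * 1)) volume 0 t :=
    (i2.sub (i0.const_mul (-c₀))).congr (fun s _ => by simp only [mul_one]; ring)
  have j2 : IntervalIntegrable
      (fun s => (t - s) ^ (σ - 1) * (rlInt β f s - (-c₀) * 1 - (-c₁) * s)) volume 0 t :=
    (j1.sub (i1.const_mul (-c₁))).congr (fun s _ => by ring)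
  rw [rlInt_sub j2 i3, rlInt_sub j1 i1, rlInt_sub i2 i0, rlInt_const hσ0 ht, rlInt_id hσ0 ht,
    rlInt_semigroup hσ0 hβ (by linarith) ht (hf t ht),
    rlInt_semigroup hσ0 hα (by linarith) ht (hw t ht)]
  ring

/-- The Volterra equation substituted `N` times into itself. -/
lemma volterra_iterate {α β a c₀ c₁ : ℝ} {f w : ℝ → ℝ} (hα : 1 ≤ α) (hβ : 0 < β)
    (hf : ∀ T > (0:ℝ), IntervalIntegrable f volume 0 T)
    (hw : ∀ T > (0:ℝ), IntervalIntegrable w volume 0 T)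
    (hv : ∀ t > 0, w t = c₀ + c₁ * t + rlInt β f t - a * rlInt α w t) {t : ℝ} (ht : 0 < t) (N : ℕ) :
    w t = ∑ n ∈ Finset.range (N + 1), (c₀ * ((-a) ^ n * t ^ (α * n) / Real.Gamma (α * n + 1))
        + c₁ * ((-a) ^ n / Real.Gamma (α * n + 2) * t ^ (α * n + 1))
        + (-a) ^ n * rlInt (α * n + β) f t)
      + (-a) ^ (N + 1) * rlInt (α * N + α) w t := by
  induction N with
  | zero =>
    rw [hv t ht]
    simp
    ring
  | succ N ih =>
    have hN : (0:ℝ) ≤ N := Nat.cast_nonneg N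
    have h := rlInt_volterra (σ := α * N + α) (by nlinarith) (by linarith) hβ hf hw hv ht
    rw [Finset.sum_range_succ]
    rw [h] at ih
    rw [ih]
    push_cast
    rw [show α * ((N:ℝ) + 1) = α * N + α by ring]
    ring

lemma norm_rlInt_le {σ t : ℝ} {u : ℝ → ℝ} (hσ : 1 ≤ σ) (ht : 0 < t)
    (hu : IntervalIntegrable u volume 0 t) :
    |rlInt σ u t| ≤ t ^ (σ - 1) / Real.Gamma σ * ∫ s in (0:ℝ)..t, |u s| := by
  have hG := Real.Gamma_pos_of_pos (by linarith : 0 < σ)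
  have hb : ‖∫ s in (0:ℝ)..t, (t - s) ^ (σ - 1) * u s‖ ≤ ∫ s in (0:ℝ)..t, t ^ (σ - 1) * |u s| := by
    refine intervalIntegral.norm_integral_le_of_norm_le ht.le ?_ (hu.abs.const_mul _)
    refine ae_of_all _ fun s hs => ?_
    have hs1 : 0 ≤ t - s := by linarith [hs.2]
    rw [norm_mul, Real.norm_of_nonneg (by positivity), Real.norm_eq_abs]
    have : (t - s) ^ (σ - 1) ≤ t ^ (σ - 1) :=
      Real.rpow_le_rpow hs1 (by linarith [hs.1]) (by linarith)
    gcongr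
  rw [intervalIntegral.integral_const_mul] at hb
  rw [rlInt, abs_mul, abs_of_nonneg (by positivity : 0 ≤ 1 / Real.Gamma σ)]
  calc _ ≤ 1 / Real.Gamma σ * (t ^ (σ - 1) * ∫ s in (0:ℝ)..t, |u s|) := by
        gcongr; exact hb
    _ = _ := by ring

/-- The remainder of the iterated Volterra equation tends to zero. -/
lemma remainder_tendsto {α a t : ℝ} {w : ℝ → ℝ} (hα : 1 ≤ α) (ha : 0 ≤ a) (ht : 0 < t)
    (hw : IntervalIntegrable w volume 0 t) :
    Tendsto (fun N : ℕ => (-a) ^ (N + 1) * rlInt (α * N + α) w t) atTop (𝓝 0) := by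
  have h1 := ((ml_summable (α := α) (β := α) hα (by linarith) ha ht.le).tendsto_atTop_zero).const_mul
    (a * t ^ (α - 1) * ∫ s in (0:ℝ)..t, |w s|)
  rw [mul_zero] at h1
  refine squeeze_zero_norm (fun N => ?_) h1
  have hN : (0:ℝ) ≤ N := Nat.cast_nonneg N
  rw [norm_mul, norm_pow, norm_neg, Real.norm_of_nonneg ha, Real.norm_eq_abs]
  have h2 := norm_rlInt_le (σ := α * N + α) (by nlinarith) ht hw
  calc a ^ (N + 1) * |rlInt (α * N + α) w t|
      ≤ a ^ (N + 1) * (t ^ (α * N + α - 1) / Real.Gamma (α * N + α) * ∫ s in (0:ℝ)..t, |w s|) := by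
        gcongr
    _ = _ := by
        rw [show α * N + α - 1 = α * N + (α - 1) by ring, Real.rpow_add ht]
        ring

/-- Convolving `f` against the series of kernels gives the Mittag-Leffler kernel. -/
lemma hasSum_rlInt {α β a t : ℝ} {f : ℝ → ℝ} (hα : 1 ≤ α) (hβ : 1 ≤ β) (ha : 0 ≤ a) (ht : 0 < t)
    (hf : IntervalIntegrable f volume 0 t) :
    HasSum (fun n : ℕ => (-a) ^ n * rlInt (α * n + β) f t)
      (∫ s in Ioo 0 t, (t - s) ^ (β - 1) * mlS α β a (t - s) * f s) := by
  have hβ0 : 0 < β := by linarith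
  set F : ℕ → ℝ → ℝ := fun n s =>
    (-a) ^ n * ((1 / Real.Gamma (α * n + β)) * ((t - s) ^ (α * n + β - 1) * f s)) with hF
  have hσ : ∀ n : ℕ, 1 ≤ α * n + β := fun n => by
    have : (0:ℝ) ≤ α * n := by positivity
    linarith
  have hInt : ∀ n, Integrable (F n) (volume.restrict (Ioo 0 t)) := fun n => by
    have := kernel_integrable_of_one_le (hσ n) hf
    rw [intervalIntegrable_iff_integrableOn_Ioo_of_le ht.le] at this
    exact (this.const_mul _).const_mul _
  have hfI : Integrable f (volume.restrict (Ioo 0 t)) :=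
    (intervalIntegrable_iff_integrableOn_Ioo_of_le ht.le).1 hf
  have hsum : Summable fun n => ∫ s in Ioo 0 t, ‖F n s‖ := by
    refine Summable.of_nonneg_of_le (fun n => by positivity) (fun n => ?_)
      ((ml_summable (α := α) hα hβ0 ha ht.le).mul_left
        (t ^ (β - 1) * ∫ s in Ioo 0 t, ‖f s‖))
    have hG := Real.Gamma_pos_of_pos (by linarith [hσ n] : 0 < α * n + β)
    calc ∫ s in Ioo 0 t, ‖F n s‖
        ≤ ∫ s in Ioo 0 t, a ^ n * ((1 / Real.Gamma (α * n + β)) * (t ^ (α * n + β - 1) * ‖f s‖)) := by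
          refine setIntegral_mono_on (hInt n).norm
            (((hfI.norm.const_mul _).const_mul _).const_mul _) measurableSet_Ioo fun s hs => ?_
          have hs1 : 0 ≤ t - s := by linarith [hs.2]
          simp only [hF]
          rw [norm_mul, norm_mul, norm_mul, norm_pow, norm_neg, Real.norm_of_nonneg ha,
            Real.norm_of_nonneg (by positivity : 0 ≤ 1 / Real.Gamma (α * n + β)),
            Real.norm_of_nonneg (by positivity : 0 ≤ (t - s) ^ (α * n + β - 1))]
          have : (t - s) ^ (α * n + β - 1) ≤ t ^ (α * n + β - 1) :=
            Real.rpow_le_rpow hs1 (by linarith [hs.1]) (by linarith [hσ n])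
          gcongr
      _ = _ := by
          rw [integral_const_mul, integral_const_mul, integral_const_mul,
            show α * n + β - 1 = α * n + (β - 1) by ring, Real.rpow_add ht]
          ring
  have h := hasSum_integral_of_summable_integral_norm hInt hsum
  have e1 : ∀ n, ∫ s in Ioo 0 t, F n s = (-a) ^ n * rlInt (α * n + β) f t := fun n => by
    simp only [hF]
    rw [integral_const_mul, integral_const_mul, rlInt, intervalIntegral.integral_of_le ht.le,
      integral_Ioc_eq_integral_Ioo]
  have e2 : ∫ s in Ioo 0 t, ∑' n, F n s
      = ∫ s in Ioo 0 t, (t - s) ^ (β - 1) * mlS α β a (t - s) * f s := by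
    refine setIntegral_congr_fun measurableSet_Ioo fun s hs => ?_
    have hs1 : 0 < t - s := by linarith [hs.2]
    have := ((ml_hasSum' hα hβ0 ha hs1 (β - 1)).mul_right (f s)).tsum_eq
    rw [← this]
    refine tsum_congr fun n => ?_
    simp only [hF]
    rw [show α * n + β - 1 = α * n + (β - 1) by ring]
    ring
  rw [e2] at h
  simpa only [e1] using h

/-- A solution of the Volterra equation with `f ≥ 0` lies above the solution of the homogeneous equation
with the same initial data: the difference is the convolution of `f` with a nonnegative kernel. -/
lemma solution_lower_bound {α β a c₀ c₁ : ℝ} {f w : ℝ → ℝ} (hα : 1 ≤ α) (hα2 : α ≤ 2)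
    (hβ : 3 * (α / 2) ≤ β) (ha : 0 < a)
    (hf : ∀ T > (0:ℝ), IntervalIntegrable f volume 0 T)
    (hw : ∀ T > (0:ℝ), IntervalIntegrable w volume 0 T)
    (hf0 : ∀ᵐ s ∂(volume.restrict (Ici (0:ℝ))), 0 ≤ f s)
    (hv : ∀ t > 0, w t = c₀ + c₁ * t + rlInt β f t - a * rlInt α w t) {t : ℝ} (ht : 0 < t) :
    c₀ * mlS α 1 a t + c₁ * (t * mlS α 2 a t) ≤ w t := by
  have hβ1 : 1 ≤ β := by linarith
  set J := ∫ s in Ioo 0 t, (t - s) ^ (β - 1) * mlS α β a (t - s) * f s with hJ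
  have s1 := (ml_hasSum (α := α) hα one_pos ha.le ht.le).mul_left c₀
  have s2 := (ml_hasSum' (α := α) hα two_pos ha.le ht 1).mul_left c₁
  have s3 := hasSum_rlInt hα hβ1 ha.le ht (hf t ht)
  have h1 := (((s1.add s2).add s3).tendsto_sum_nat.comp (tendsto_add_atTop_nat 1)).add
    (remainder_tendsto hα ha.le ht (hw t ht))
  have h2 := h1.congr (fun N =>
    (volterra_iterate hα (by linarith) hf hw hv ht N).symm)
  have h3 := tendsto_nhds_unique tendsto_const_nhds h2
  have hJ0 : 0 ≤ J := by
    refine integral_nonneg_of_ae ?_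
    have hf1 : ∀ᵐ s ∂(volume.restrict (Ioo 0 t)), 0 ≤ f s :=
      ae_restrict_of_ae_restrict_of_subset (fun s hs => hs.1.le) hf0
    filter_upwards [hf1, ae_restrict_mem measurableSet_Ioo] with s hs hst
    exact mul_nonneg (ml_nonneg hα hα2 hβ ha (t - s) (by linarith [hst.2])) hs
  rw [Real.rpow_one] at h3
  linarith

/-- Splitting off the first term of the series for `E_{α,2-α}`. -/
lemma ml_shift {α a t : ℝ} (hα : 1 ≤ α) (hα2 : α < 2) (ha : 0 ≤ a) (ht : 0 < t) :
    mlS α (2 - α) a t = 1 / Real.Gamma (2 - α) - a * (t ^ α * mlS α 2 a t) := by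
  have h1 := ml_hasSum (α := α) (β := 2 - α) hα (by linarith) ha ht.le
  have h2 := (hasSum_nat_add_iff' 1).2 h1
  have h3 := (ml_hasSum' (α := α) hα two_pos ha ht α).mul_left (-a)
  have h4 := h2.unique (h3.congr_fun (fun n => by
    push_cast
    rw [show α * ((n:ℝ) + 1) + (2 - α) = α * n + 2 by ring,
      show α * ((n:ℝ) + 1) = α * n + α by ring]
    ring))
  simp at h4
  rw [one_div]
  linarith

/-- Lower asymptotics of the homogeneous solution. Writing `t ^ α E_{α,2}` through `E_{α,2-α}` isolates
the constant `1 / (a Γ(2 - α))`, and `ml_decay` bounds what is left. The condition `α < 3 / 2` is what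
`ml_decay` requires for `β = 2 - α`. -/
lemma lower_asymptotics {α a c₀ c₁ : ℝ} (hα1 : 1 < α) (hα2 : α < 3 / 2) (ha : 0 < a)
    (hc₁ : 0 ≤ c₁) :
    ∃ K, ∀ t > 0, c₁ / (a * Real.Gamma (2 - α)) - K * t ^ (α - 2)
      ≤ t ^ (α - 1) * (c₀ * mlS α 1 a t + c₁ * (t * mlS α 2 a t)) := by
  obtain ⟨C₁, h1⟩ := ml_decay (β := 1) hα1 (by linarith) one_pos hα1 (by linarith) ha
  obtain ⟨C₂, h2⟩ := ml_decay (β := 2 - α) hα1 (by linarith) (by linarith) (by linarith)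
    (by linarith) ha
  refine ⟨|c₀| * C₁ + c₁ / a * C₂, fun t ht => ?_⟩
  have hG := Real.Gamma_pos_of_pos (by linarith : 0 < 2 - α)
  have hs := ml_shift hα1.le (by linarith) ha.le ht
  set X := mlS α 1 a t
  set Y := mlS α 2 a t
  set Z := mlS α (2 - α) a t
  have e1 : t ^ (α - 1) = t ^ (α - 2) * t := by
    rw [← Real.rpow_add_one ht.ne']; congr 1; ring
  have e2 : t ^ (α - 1) * t = t ^ α := by
    rw [← Real.rpow_add_one ht.ne']; congr 1; ring
  have e3 : t ^ (α - 2) * t ^ (2 - α) = 1 := by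
    rw [← Real.rpow_add ht]; simp
  have hp : 0 < t ^ (α - 2) := by positivity
  have hY : t ^ α * Y = (1 / Real.Gamma (2 - α) - Z) / a := by
    rw [hs]; field_simp; ring
  have h1' := h1 t ht
  rw [Real.rpow_one] at h1'
  have hX : -(|c₀| * C₁) ≤ c₀ * (t * X) := by
    have : |c₀ * (t * X)| ≤ |c₀| * C₁ := by rw [abs_mul]; gcongr
    exact neg_le_of_abs_le this
  have hZ : Z ≤ t ^ (α - 2) * C₂ := by
    calc Z = t ^ (α - 2) * (t ^ (2 - α) * Z) := by rw [← mul_assoc, e3, one_mul]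
      _ ≤ _ := by gcongr; exact (le_abs_self _).trans (h2 t ht)
  calc c₁ / (a * Real.Gamma (2 - α)) - (|c₀| * C₁ + c₁ / a * C₂) * t ^ (α - 2)
      = t ^ (α - 2) * (-(|c₀| * C₁)) + c₁ / a * (1 / Real.Gamma (2 - α) - t ^ (α - 2) * C₂) := by
        field_simp; ring
    _ ≤ t ^ (α - 2) * (c₀ * (t * X)) + c₁ / a * (1 / Real.Gamma (2 - α) - Z) := by gcongr
    _ = t ^ (α - 1) * (c₀ * X) + c₁ * (t ^ α * Y) := by rw [hY, e1]; ring
    _ = _ := by rw [← e2]; ring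

end Helpers

/-- Lemma 2.3 (v): if γ ≥ α/2, α + γ ≤ 2 and w'(0) > 0, then liminf t^{α−1} w(t) > 0. -/
theorem liminf_pos_v
    (γ α p a b : ℝ) (f w : ℝ → ℝ)
    (hγ : 0 < γ) (hα1 : 1 < α) (hα2 : α < 2) (hp : 1 < p) (ha : 0 < a) (hb : 0 < b)
    (hf : ∀ T > (0:ℝ), IntervalIntegrable f volume 0 T)
    (hw : ContDiff ℝ 1 w)
    (hw0 : ∃ t : ℝ, 0 ≤ t ∧ w t ≠ 0)
    (hAC : ∀ T > (0:ℝ), AC2On (capKernel α w) T)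
    (heq : ∀ᵐ t ∂(volume.restrict (Set.Ici (0:ℝ))),
      caputoD α w t + a * w t = rlInt γ f t ∧ f t ≥ b * |w t| ^ p)
    (hγα : α / 2 ≤ γ) (hαγ : α + γ ≤ 2) (hw' : 0 < deriv w 0) :
    0 < liminf (fun t : ℝ => ((t ^ (α - 1) * w t : ℝ) : EReal)) atTop := by
  have hv := volterra hγ hα1 hα2 hf hw hAC (heq.mono fun t h => h.1)
  have hf0 : ∀ᵐ t ∂(volume.restrict (Set.Ici (0:ℝ))), 0 ≤ f t := by
    filter_upwards [heq] with t h
    have : 0 ≤ b * |w t| ^ p := by positivity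
    linarith [h.2]
  have hwi : ∀ T > (0:ℝ), IntervalIntegrable w volume 0 T :=
    fun T _ => hw.continuous.intervalIntegrable _ _
  obtain ⟨K, hK⟩ := lower_asymptotics (c₀ := w 0) hα1 (by linarith) ha hw'.le
  have hG := Real.Gamma_pos_of_pos (by linarith : 0 < 2 - α)
  set L := deriv w 0 / (a * Real.Gamma (2 - α)) with hL
  have hL0 : 0 < L := by positivity
  have hlim : Tendsto (fun t : ℝ => L - K * t ^ (α - 2)) atTop (nhds L) := by
    have h := (tendsto_rpow_neg_atTop (by linarith : 0 < 2 - α)).const_mul K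
    simpa using h.const_sub L
  refine lt_of_lt_of_le (EReal.coe_pos.2 (half_pos hL0)) (le_liminf_of_le (by isBoundedDefault) ?_)
  filter_upwards [hlim.eventually (lt_mem_nhds (half_lt_self hL0)), eventually_gt_atTop 0]
    with t h1 ht
  rw [EReal.coe_le_coe_iff]
  have h2 := solution_lower_bound hα1.le hα2.le (by linarith) ha hf hwi hf0 hv ht
  calc L / 2 ≤ t ^ (α - 1) * (w 0 * mlS α 1 a t + deriv w 0 * (t * mlS α 2 a t)) :=
        h1.le.trans (hK t ht)
    _ ≤ t ^ (α - 1) * w t := by gcongr
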